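/- Multiplicity of the first non-affine root of E11: let β = (1,2,3,4,5,6,7,8,5,2,4) ∈ ℕ^{11} in the coordinates of A(E11). Then βᵀ A(E11) β = −2 and the root space of β in the Kac–Moody algebra g(A(E11)), namely the simultaneous eigenspace {x : [h_i,x] = (∑_j A(E11)_{ij} β_j) x for all i}, has dimension 46, i.e. mult(β) = 46. -/

import Mathlib

noncomputable section

open CartanMatrix

/-- A generalized Cartan matrix: `A i i = 2`, off-diagonal entries are non-positive, and
`A i j = 0 ↔ A j i = 0`. -/
def IsGCM {B : Type*} (A : Matrix B B ℤ) : Prop :=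
  (∀ i, A i i = 2) ∧ (∀ i j, i ≠ j → A i j ≤ 0) ∧ (∀ i j, A i j = 0 ↔ A j i = 0)

/-- The images in the Kac–Moody algebra `Matrix.ToLieAlgebra ℚ A` of the generators of the
free Lie algebra. -/
def KMgen {B : Type*} [DecidableEq B] (A : Matrix B B ℤ) (x : Generators B) :
    Matrix.ToLieAlgebra ℚ A :=
  LieSubmodule.Quotient.mk (N := Relations.toIdeal ℚ A) (FreeLieAlgebra.of ℚ x)

/-- The Cartan generator `h i`. -/
def gH {B : Type*} [DecidableEq B] (A : Matrix B B ℤ) (i : B) : Matrix.ToLieAlgebra ℚ A :=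
  KMgen A (Generators.H i)

/-- The raising generator `e i`. -/
def gE {B : Type*} [DecidableEq B] (A : Matrix B B ℤ) (i : B) : Matrix.ToLieAlgebra ℚ A :=
  KMgen A (Generators.E i)

/-- The lowering generator `f i`. -/
def gF {B : Type*} [DecidableEq B] (A : Matrix B B ℤ) (i : B) : Matrix.ToLieAlgebra ℚ A :=
  KMgen A (Generators.F i)

/-- The root space of `g(A)` attached to `n : B → ℤ`: the simultaneous eigenspace of the
adjoint action of the Cartan generators `h i`, with eigenvalues `∑ j, A i j * n j`. -/
def rootSpace {B : Type*} [Fintype B] [DecidableEq B] (A : Matrix B B ℤ) (n : B → ℤ) :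
    Submodule ℚ (Matrix.ToLieAlgebra ℚ A) :=
  ⨅ i, Module.End.eigenspace
    (LieAlgebra.ad ℚ (Matrix.ToLieAlgebra ℚ A) (gH A i)) ((∑ j, A i j * n j : ℤ) : ℚ)

/-- The multiplicity of `n` in `g(A)`: the dimension of the root space. -/
def rootMult {B : Type*} [Fintype B] [DecidableEq B] (A : Matrix B B ℤ) (n : B → ℤ) : ℕ :=
  Module.finrank ℚ (rootSpace A n)

/-- The Cartan matrix of `E11` (node 1 ↦ index `0` is the very extended node; indices `0`–`9`
form a chain and index `10` is attached to index `7`). -/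
def E11M : Matrix (Fin 11) (Fin 11) ℤ := fun i j =>
  if i = j then 2
  else if (i.val + 1 = j.val ∧ j.val ≤ 9) ∨ (j.val + 1 = i.val ∧ i.val ≤ 9) ∨
          (i.val = 7 ∧ j.val = 10) ∨ (i.val = 10 ∧ j.val = 7) then -1
  else 0

/-! ### Canonical anticommutation relations -/

/-- Abstract fermionic creation (`d`) and annihilation (`c`) operators. -/
structure CAR {R : Type*} [Ring R] (c d : ℕ → R) : Prop where
  cc : ∀ i j, c i * c j = -(c j * c i)
  dd : ∀ i j, d i * d j = -(d j * d i)
  cd : ∀ i j, i ≠ j → c i * d j = -(d j * c i)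
  cd1 : ∀ i, c i * d i = 1 - d i * c i
  c2 : ∀ i, c i * c i = 0
  d2 : ∀ i, d i * d i = 0

theorem car_fresh (l : List ℕ) (hl : l.length ≤ 9) : ∃ x, x < 10 ∧ x ∉ l := by
  by_contra! h
  have : (Finset.range 10) ⊆ l.toFinset := by
    intro x hx
    simpa using h x (by simpa using hx)
  have h1 := Finset.card_le_card this
  have h2 := l.toFinset_card_le
  simp at h1
  omega

section
variable {R : Type*} [Ring R] [Algebra ℚ R] {c d : ℕ → R} (H : CAR c d)

/-- `x` normalizes the submodule `K` under the commutator action. -/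
def AdK (K : Submodule ℚ R) (x : R) : Prop := ∀ y ∈ K, x * y - y * x ∈ K

theorem AdK.comm {K : Submodule ℚ R} {x y : R} (hx : AdK K x) (hy : AdK K y) :
    AdK K (x * y - y * x) := by
  intro z hz
  have := K.sub_mem (hx _ (hy _ hz)) (hy _ (hx _ hz))
  convert this using 1
  noncomm_ring

theorem AdK.neg {K : Submodule ℚ R} {x : R} (hx : AdK K x) : AdK K (-x) := by
  intro z hz
  have := K.neg_mem (hx _ hz)
  convert this using 1
  noncomm_ring

include H

omit [Algebra ℚ R] in
theorem car_raise (k b : ℕ) (hb : b ≠ k) :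
    (d (k+1) * c k) * (d k * d b) - (d k * d b) * (d (k+1) * c k) = d (k+1) * d b := by
  have e1 : (d (k+1) * c k) * (d k * d b) = d (k+1) * (c k * d k) * d b := by noncomm_ring
  have e2 : (d k * d b) * (d (k+1) * c k) = d (k+1) * d k * d b * c k := by
    have : d k * d b * d (k+1) = d (k+1) * d k * d b := by
      rw [mul_assoc, H.dd b, mul_neg, ← mul_assoc, H.dd k, neg_mul, neg_neg]
    rw [← mul_assoc, this]
  rw [e1, e2, H.cd1, mul_sub, sub_mul, mul_one]
  have e3 : d (k+1) * (d k * c k) * d b = - (d (k+1) * d k * d b * c k) := by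
    rw [mul_assoc, mul_assoc, H.cd k b hb.symm]; noncomm_ring
  rw [e3]; noncomm_ring

theorem car_pairs {K : Submodule ℚ R} (h9 : AdK K (d 0 * d 1))
    (hq : ∀ k < 9, AdK K (d (k+1) * c k)) (a b : ℕ) (hab : a ≠ b) (ha : a < 10) (hb : b < 10) :
    AdK K (d a * d b) := by
  have s1 : ∀ a, 1 ≤ a → a < 10 → AdK K (d a * d 0) := by
    intro a h1
    induction a, h1 using Nat.le_induction with
    | base => intro _; rw [H.dd]; exact h9.neg
    | succ k hk ih =>
      intro hk'
      have := (hq k (by omega)).comm (ih (by omega))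
      rwa [car_raise H k 0 (by omega)] at this
  have s2 : ∀ a b, b < a → a < 10 → AdK K (d b * d a) := by
    intro a b
    induction b with
    | zero => intro h h'; rw [H.dd]; exact (s1 a h h').neg
    | succ k ih =>
      intro h h'
      have := (hq k (by omega)).comm (ih (by omega) h')
      rwa [car_raise H k a (by omega)] at this
  rcases lt_or_gt_of_ne hab with h | h
  · exact s2 _ _ h hb
  · rw [H.dd]; exact (s2 _ _ h ha).neg

omit [Algebra ℚ R] in
theorem car_perm {l l' : List ℕ} (h : l.Perm l') :
    (l.map c).prod = (l'.map c).prod ∨ (l.map c).prod = -(l'.map c).prod := by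
  induction h with
  | nil => simp
  | cons x _ ih => rcases ih with h | h <;> simp [h]
  | swap x y l =>
    right
    simp only [List.map_cons, List.prod_cons]
    rw [← mul_assoc, H.cc, neg_mul, mul_assoc]
  | trans _ _ ih1 ih2 =>
    rcases ih1 with h | h <;> rcases ih2 with h' | h' <;> simp [h, h']

theorem car_perm_mem {K : Submodule ℚ R} {l l' : List ℕ} (h : l.Perm l')
    (hl : (l'.map c).prod ∈ K) : (l.map c).prod ∈ K := by
  rcases car_perm H h with h | h <;> rw [h]
  · exact hl
  · exact K.neg_mem hl

theorem car_lower {K : Submodule ℚ R} {k : ℕ} (hq : AdK K (d (k+1) * c k)) (l : List ℕ)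
    (h2 : k + 1 ∉ l) (hl : (((k+1) :: l).map c).prod ∈ K) :
    ((k :: l).map c).prod ∈ K := by
  have hcomm : ∀ l : List ℕ, k+1 ∉ l →
      Commute (d (k+1) * c k) ((l.map c).prod) := by
    intro l
    induction l with
    | nil => intro _; simp
    | cons x l ih =>
      intro h2
      simp only [List.mem_cons, not_or] at h2
      simp only [List.map_cons, List.prod_cons]
      refine Commute.mul_right ?_ (ih h2.2)
      change d (k+1) * c k * c x = c x * (d (k+1) * c k)
      rw [← mul_assoc, H.cd x (k+1) (Ne.symm h2.1), mul_assoc, H.cc k x]; noncomm_ring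
  have := hq _ hl
  simp only [List.map_cons, List.prod_cons] at this ⊢
  have hc := (hcomm l h2).eq
  have e : d (k+1) * c k * (c (k+1) * (l.map c).prod) - c (k+1) * (l.map c).prod * (d (k+1) * c k)
      = - (c k * (l.map c).prod) := by
    rw [mul_assoc (c (k+1)), ← hc]
    have e1 : d (k+1) * c k * (c (k+1) * (l.map c).prod) =
      -(d (k+1) * c (k+1) * c k * (l.map c).prod) := by
      rw [← mul_assoc, mul_assoc (d (k+1)), H.cc k (k+1)]; noncomm_ring
    have e2 : c (k+1) * (d (k+1) * c k * (l.map c).prod) =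
      (1 - d (k+1) * c (k+1)) * c k * (l.map c).prod := by
      rw [← H.cd1]; noncomm_ring
    rw [e1, e2]; noncomm_ring
  rw [e] at this
  simpa using K.neg_mem this

theorem car_holes {K : Submodule ℚ R} (hq : ∀ k < 9, AdK K (d (k+1) * c k))
    (h0 : (([2,3,4,5,6,7,8,9] : List ℕ).map c).prod ∈ K) (y z : ℕ) (hyz : y < z) (hz : z < 10) :
    ∀ l : List ℕ, l.Nodup → (∀ x, x ∈ l ↔ x < 10 ∧ x ≠ y ∧ x ≠ z) → (l.map c).prod ∈ K := by
  have step : ∀ (k : ℕ), k < 9 → ∀ (P P' : ℕ → Prop),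
      P k → ¬ P (k+1) → (∀ x, P' x ↔ (x = k + 1 ∨ (P x ∧ x ≠ k))) →
      (∀ l : List ℕ, l.Nodup → (∀ x, x ∈ l ↔ P' x) → (l.map c).prod ∈ K) →
      (∀ l : List ℕ, l.Nodup → (∀ x, x ∈ l ↔ P x) → (l.map c).prod ∈ K) := by
    intro k hk P P' h1 h2 h3 h4 l hl hlP
    have hkl : k ∈ l := (hlP k).2 h1
    refine car_perm_mem H (List.perm_cons_erase hkl) ?_
    have hn : k + 1 ∉ l.erase k := fun h => h2 ((hlP _).1 (List.mem_of_mem_erase h))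
    refine car_lower H (hq k hk) _ hn (h4 _ ?_ ?_)
    · exact List.nodup_cons.2 ⟨hn, hl.erase k⟩
    · intro x
      rw [List.mem_cons, hl.mem_erase_iff, hlP, h3]; tauto
  have s0 : ∀ l : List ℕ, l.Nodup → (∀ x, x ∈ l ↔ x < 10 ∧ x ≠ 0 ∧ x ≠ 1) → (l.map c).prod ∈ K := by
    intro l hl h
    refine car_perm_mem H ((List.perm_ext_iff_of_nodup hl (by decide)).2 ?_) h0
    intro x
    rw [h]
    simp only [List.mem_cons, List.not_mem_nil, or_false]
    omega
  have s1 : ∀ z, 1 ≤ z → z < 10 →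
      ∀ l : List ℕ, l.Nodup → (∀ x, x ∈ l ↔ x < 10 ∧ x ≠ 0 ∧ x ≠ z) → (l.map c).prod ∈ K := by
    intro z h1
    induction z, h1 using Nat.le_induction with
    | base => intro _; exact s0
    | succ k hk ih =>
      intro hk'
      exact step k (by omega) _ _ (by omega) (by omega) (by intro x; omega) (ih (by omega))
  induction y with
  | zero => exact s1 z hyz hz
  | succ k ih =>
    exact step k (by omega) _ _ (by omega) (by omega) (by intro x; omega) (ih (by omega))

theorem car_eight {K : Submodule ℚ R} (hq : ∀ k < 9, AdK K (d (k+1) * c k))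
    (h0 : (([2,3,4,5,6,7,8,9] : List ℕ).map c).prod ∈ K) (l : List ℕ) (hl : l.Nodup)
    (h8 : l.length = 8) (h10 : ∀ x ∈ l, x < 10) : (l.map c).prod ∈ K := by
  have hsub : l.toFinset ⊆ Finset.range 10 := by
    intro x hx; simpa using h10 x (by simpa using hx)
  have hcard : (Finset.range 10 \ l.toFinset).card = 2 := by
    rw [Finset.card_sdiff_of_subset hsub, List.toFinset_card_of_nodup hl, h8]; simp
  obtain ⟨y, z, hyz, he⟩ := Finset.card_eq_two.1 hcard
  have hmem : ∀ x, x ∈ l ↔ x < 10 ∧ x ≠ y ∧ x ≠ z := by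
    intro x
    have := congrArg (x ∈ ·) he
    simp only [Finset.mem_sdiff, Finset.mem_range, List.mem_toFinset, Finset.mem_insert,
      Finset.mem_singleton, eq_iff_iff] at this
    have := h10 x
    tauto
  have hy : y < 10 := by
    have : y ∈ Finset.range 10 \ l.toFinset := by rw [he]; simp
    simpa using (Finset.mem_sdiff.1 this).1
  have hz : z < 10 := by
    have : z ∈ Finset.range 10 \ l.toFinset := by rw [he]; simp
    simpa using (Finset.mem_sdiff.1 this).1
  rcases lt_or_gt_of_ne hyz with h | h
  · exact car_holes H hq h0 y z h hz l hl hmem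
  · exact car_holes H hq h0 z y h hy l hl (fun x => by rw [hmem]; tauto)

omit [Algebra ℚ R] in
theorem car_comm_c (a b x : ℕ) (ha : x ≠ a) (hb : x ≠ b) : Commute (d a * d b) (c x) := by
  change d a * d b * c x = c x * (d a * d b)
  rw [← mul_assoc, H.cd x a ha, neg_mul, mul_assoc, mul_assoc, H.cd x b hb]; noncomm_ring

omit [Algebra ℚ R] in
theorem car_comm_d (a b x : ℕ) : Commute (d a * d b) (d x) := by
  change d a * d b * d x = d x * (d a * d b)
  rw [← mul_assoc, H.dd x a, neg_mul, mul_assoc, mul_assoc, H.dd x b]; noncomm_ring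

omit [Algebra ℚ R] in
theorem car_pair_comm (a b : ℕ) (hab : a ≠ b) :
    (d b * d a) * (c a * c b) - (c a * c b) * (d b * d a) =
      (d a * c a + d b * c b - 1) := by
  have e1 : (d b * d a) * (c a * c b) = d a * c a * (d b * c b) := by
    rw [H.dd b a]
    have : d a * d b * (c a * c b) = d a * (d b * c a) * c b := by noncomm_ring
    rw [neg_mul, this]
    have h := H.cd a b hab
    have h' : d b * c a = -(c a * d b) := by rw [h, neg_neg]
    rw [h']; noncomm_ring
  have e2 : (c a * c b) * (d b * d a) = 1 - d a * c a - d b * c b + d a * c a * (d b * c b) := by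
    have : (c a * c b) * (d b * d a) = c a * (c b * d b) * d a := by noncomm_ring
    rw [this, H.cd1]
    have h3 : c a * (d b * c b) * d a = (d b * c b) * (c a * d a) := by
      have : c a * (d b * c b) * d a = (c a * d b) * (c b * d a) := by noncomm_ring
      rw [this, H.cd a b hab, H.cd b a hab.symm]
      have : -(d b * c a) * -(d a * c b) = d b * (c a * d a) * c b := by noncomm_ring
      rw [this, H.cd1]
      have h4 : d b * (1 - d a * c a) * c b = d b * c b - (d b * d a) * (c a * c b) := by noncomm_ring
      have h5 : d b * c b * (1 - d a * c a) = d b * c b - d b * (c b * d a) * c a := by noncomm_ring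
      rw [h4, h5, H.cd b a hab.symm, H.cc a b]; noncomm_ring
    have h6 : d b * c b * (d a * c a) = d a * c a * (d b * c b) := by
      have : d b * c b * (d a * c a) = d b * (c b * d a) * c a := by noncomm_ring
      rw [this, H.cd b a hab.symm]
      have : d b * -(d a * c b) * c a = -((d b * d a) * (c b * c a)) := by noncomm_ring
      rw [this, H.cc b a, mul_neg, neg_neg, e1]
    rw [mul_sub, sub_mul, h3, mul_one, H.cd1, mul_sub, h6, mul_one]; noncomm_ring
  rw [e1, e2]; noncomm_ring

set_option maxHeartbeats 1000000 in
/-- the main relation: quartic diagonal monomials lie in `K`. -/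
theorem car_main {K : Submodule ℚ R} (h9 : AdK K (d 0 * d 1))
    (hq : ∀ k < 9, AdK K (d (k+1) * c k))
    (h0 : (([2,3,4,5,6,7,8,9] : List ℕ).map c).prod ∈ K)
    (u : ℕ → R) (hu : ∀ a, u a = 2 * (d a * c a) - 1)
    (x1 x2 x3 x4 : ℕ) (hx : [x1,x2,x3,x4].Nodup) (hx' : ∀ x ∈ [x1,x2,x3,x4], x < 10) :
    u x1 * u x2 * u x3 * u x4 ∈ K := by
  have hucomm : ∀ a b x, x ≠ a → x ≠ b → Commute (d a * d b) (u x) := by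
    intro a b x h1 h2
    rw [hu]
    refine Commute.sub_right (Commute.mul_right ?_ ?_) (Commute.one_right _)
    · exact Commute.ofNat_right _ _
    · exact (car_comm_d H a b x).mul_right (car_comm_c H a b x h1 h2)
  have hub : ∀ a b, a ≠ b → (d b * d a) * (2 * (c a * c b)) - (2 * (c a * c b)) * (d b * d a) =
      u a + u b := by
    intro a b hab
    rw [hu, hu]
    have := car_pair_comm H a b hab
    have e : 2 * (d a * c a) - 1 + (2 * (d b * c b) - 1) = 2 * (d a * c a + d b * c b - 1) := by
      noncomm_ring
    rw [e, ← this]; noncomm_ring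
  -- one pair replaced
  have hrep : ∀ (a b : ℕ) (X Y : R), a ≠ b → a < 10 → b < 10 → Commute (d b * d a) X →
      Commute (d b * d a) Y →
      X * (2 * (c a * c b)) * Y ∈ K → X * (u a + u b) * Y ∈ K := by
    intro a b X Y hab ha hb hX hY hm
    have := car_pairs H h9 hq b a hab.symm hb ha _ hm
    convert this using 1
    rw [← hub a b hab]
    have e1 : d b * d a * (X * (2 * (c a * c b)) * Y) = X * (d b * d a * (2 * (c a * c b))) * Y := by
      rw [← mul_assoc, ← mul_assoc, hX.eq]; noncomm_ring
    have e2 : (X * (2 * (c a * c b)) * Y) * (d b * d a) =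
        X * ((2 * (c a * c b)) * (d b * d a)) * Y := by
      rw [mul_assoc _ Y, ← hY.eq]; noncomm_ring
    rw [e1, e2]; noncomm_ring
  have T : ∀ a1 b1 a2 b2 a3 b3 a4 b4 : ℕ, [a1,b1,a2,b2,a3,b3,a4,b4].Nodup →
      (∀ x ∈ [a1,b1,a2,b2,a3,b3,a4,b4], x < 10) →
      (u a1 + u b1) * (u a2 + u b2) * (u a3 + u b3) * (u a4 + u b4) ∈ K := by
    intro a1 b1 a2 b2 a3 b3 a4 b4 hn hlt
    have h := car_eight H hq h0 _ hn rfl hlt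
    simp only [List.map_cons, List.map_nil, List.prod_cons, List.prod_nil, mul_one] at h
    simp only [List.nodup_cons, List.mem_cons, List.not_mem_nil, or_false, not_or] at hn
    simp only [List.mem_cons, List.not_mem_nil, or_false, forall_eq_or_imp, forall_eq] at hlt
    obtain ⟨g1, g2, g3, g4, g5, g6, g7, g8⟩ := hlt
    have cx : ∀ a b x, x ≠ a → x ≠ b → Commute (d a * d b) (c x) := car_comm_c H
    have t0 : 1 * (2 * (c a1 * c b1)) * ((2 * (c a2 * c b2)) * (2 * (c a3 * c b3)) * (2 * (c a4 * c b4))) ∈ K := by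
      have := K.smul_mem (16 : ℚ) h
      convert this using 1
      rw [Algebra.smul_def, map_ofNat]; noncomm_ring
    have two : ∀ z : R, Commute z 2 := fun z => Commute.ofNat_right _ _
    have cp : ∀ a b x y, x ≠ a → x ≠ b → y ≠ a → y ≠ b → Commute (d a * d b) (2 * (c x * c y)) :=
      fun a b x y h1 h2 h3 h4 => (two _).mul_right ((cx a b x h1 h2).mul_right (cx a b y h3 h4))
    have cq : ∀ a b x y, x ≠ a → x ≠ b → y ≠ a → y ≠ b → Commute (d a * d b) (u x + u y) :=
      fun a b x y h1 h2 h3 h4 => (hucomm a b x h1 h2).add_right (hucomm a b y h3 h4)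
    have t1 := hrep a1 b1 _ _ (by rintro rfl; simp at hn) g1 g2 (Commute.one_right _)
      (((cp _ _ _ _ (by rintro rfl; simp at hn) (by rintro rfl; simp at hn) (by rintro rfl; simp at hn) (by rintro rfl; simp at hn)).mul_right
        (cp _ _ _ _ (by rintro rfl; simp at hn) (by rintro rfl; simp at hn) (by rintro rfl; simp at hn) (by rintro rfl; simp at hn))).mul_right
        (cp _ _ _ _ (by rintro rfl; simp at hn) (by rintro rfl; simp at hn) (by rintro rfl; simp at hn) (by rintro rfl; simp at hn))) t0
    have t1' : (u a1 + u b1) * (2 * (c a2 * c b2)) * ((2 * (c a3 * c b3)) * (2 * (c a4 * c b4))) ∈ K := by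
      convert t1 using 1; noncomm_ring
    have t2 := hrep a2 b2 _ _ (by rintro rfl; simp at hn) g3 g4
      (cq _ _ _ _ (by rintro rfl; simp at hn) (by rintro rfl; simp at hn) (by rintro rfl; simp at hn) (by rintro rfl; simp at hn))
      ((cp _ _ _ _ (by rintro rfl; simp at hn) (by rintro rfl; simp at hn) (by rintro rfl; simp at hn) (by rintro rfl; simp at hn)).mul_right
        (cp _ _ _ _ (by rintro rfl; simp at hn) (by rintro rfl; simp at hn) (by rintro rfl; simp at hn) (by rintro rfl; simp at hn))) t1'
    rw [← mul_assoc] at t2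
    have t3 := hrep a3 b3 _ _ (by rintro rfl; simp at hn) g5 g6
      ((cq _ _ _ _ (by rintro rfl; simp at hn) (by rintro rfl; simp at hn) (by rintro rfl; simp at hn) (by rintro rfl; simp at hn)).mul_right
        (cq _ _ _ _ (by rintro rfl; simp at hn) (by rintro rfl; simp at hn) (by rintro rfl; simp at hn) (by rintro rfl; simp at hn)))
      (cp _ _ _ _ (by rintro rfl; simp at hn) (by rintro rfl; simp at hn) (by rintro rfl; simp at hn) (by rintro rfl; simp at hn)) t2
    rw [← mul_one (_ * _)] at t3
    have t4 := hrep a4 b4 _ _ (by rintro rfl; simp at hn) g7 g8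
      (((cq _ _ _ _ (by rintro rfl; simp at hn) (by rintro rfl; simp at hn) (by rintro rfl; simp at hn) (by rintro rfl; simp at hn)).mul_right
        (cq _ _ _ _ (by rintro rfl; simp at hn) (by rintro rfl; simp at hn) (by rintro rfl; simp at hn) (by rintro rfl; simp at hn))).mul_right
        (cq _ _ _ _ (by rintro rfl; simp at hn) (by rintro rfl; simp at hn) (by rintro rfl; simp at hn) (by rintro rfl; simp at hn)))
      (Commute.one_right _) t3
    rwa [mul_one] at t4
  -- polarization
  have pol : ∀ (X Y : R) (l : List ℕ) (x : ℕ), l.length ≤ 7 → x ∉ l → x < 10 →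
      (∀ a b, a ≠ b → a < 10 → b < 10 → a ∉ l → b ∉ l → X * (u a + u b) * Y ∈ K) →
      X * u x * Y ∈ K := by
    intro X Y l x hl hxl hx10 h
    obtain ⟨y, hy, hy'⟩ := car_fresh (x :: l) (by simp; omega)
    obtain ⟨z, hz, hz'⟩ := car_fresh (y :: x :: l) (by simp; omega)
    simp only [List.mem_cons, not_or] at hy' hz'
    have h1 := h x y (Ne.symm hy'.1) hx10 hy hxl hy'.2
    have h2 := h x z (Ne.symm hz'.2.1) hx10 hz hxl hz'.2.2
    have h3 := h y z (Ne.symm hz'.1) hy hz hy'.2 hz'.2.2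
    have := K.smul_mem (1/2 : ℚ) (K.sub_mem (K.add_mem h1 h2) h3)
    convert this using 1
    have e : X * (u x + u y) * Y + X * (u x + u z) * Y - X * (u y + u z) * Y = (2:ℚ) • (X * u x * Y) := by
      rw [two_smul]; noncomm_ring
    rw [e, smul_smul]; norm_num
  simp only [List.nodup_cons, List.mem_cons, List.not_mem_nil, or_false, not_or] at hx
  simp only [List.mem_cons, List.not_mem_nil, or_false, forall_eq_or_imp, forall_eq] at hx'
  obtain ⟨g1, g2, g3, g4⟩ := hx'
  have := pol (u x1 * u x2 * u x3) 1 [x1, x2, x3] x4 (by simp) (by simp; tauto) g4 ?_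
  · simpa using this
  intro a4 b4 n4 ha4 hb4 na4 nb4
  rw [mul_one]
  simp only [List.mem_cons, List.not_mem_nil, or_false, not_or] at na4 nb4
  refine pol (u x1 * u x2) (u a4 + u b4) [x1, x2, a4, b4] x3 (by simp) (by simp; tauto) g3 ?_
  intro a3 b3 n3 ha3 hb3 na3 nb3
  simp only [List.mem_cons, List.not_mem_nil, or_false, not_or] at na3 nb3
  rw [mul_assoc (u x1 * u x2)]
  refine pol (u x1) _ [x1, a3, b3, a4, b4] x2 (by simp) (by simp; tauto) g2 ?_
  intro a2 b2 n2 ha2 hb2 na2 nb2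
  simp only [List.mem_cons, List.not_mem_nil, or_false, not_or] at na2 nb2
  have := pol 1 ((u a2 + u b2) * ((u a3 + u b3) * (u a4 + u b4))) [a2, b2, a3, b3, a4, b4] x1
    (by simp) (by simp; tauto) g1 ?_
  · convert this using 1; noncomm_ring
  intro a1 b1 n1 ha1 hb1 na1 nb1
  simp only [List.mem_cons, List.not_mem_nil, or_false, not_or] at na1 nb1
  have := T a1 b1 a2 b2 a3 b3 a4 b4 (by simp; tauto) (by simp; tauto)
  convert this using 1; noncomm_ring
end

/-! ### Fock space on bit masks -/

/-- sign attached to the `k`-th bit of `w` -/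
def bsg (w k : ℕ) : ℚ := if w.testBit k then -1 else 1

/-- character of the cube -/
def chi (I : Finset ℕ) (w : ℕ) : ℚ := ∏ q ∈ I, bsg w q

theorem testBit_flip (w k j : ℕ) : (w ^^^ 2 ^ k).testBit j = (w.testBit j ^^ decide (k = j)) := by
  rw [Nat.testBit_xor, Nat.testBit_two_pow]

theorem bsg_flip (w k j : ℕ) : bsg (w ^^^ 2 ^ k) j = if k = j then - bsg w j else bsg w j := by
  unfold bsg
  rw [testBit_flip]
  by_cases h : k = j <;> cases w.testBit j <;> simp [h]

theorem bsg_sq (w k : ℕ) : bsg w k * bsg w k = 1 := by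
  unfold bsg; split <;> norm_num

theorem chi_sq (I : Finset ℕ) (w : ℕ) : chi I w * chi I w = 1 := by
  unfold chi; rw [← Finset.prod_mul_distrib]; exact Finset.prod_eq_one fun k _ => bsg_sq w k

theorem chi_flip (I : Finset ℕ) (w k : ℕ) :
    chi I (w ^^^ 2 ^ k) = if k ∈ I then - chi I w else chi I w := by
  unfold chi
  simp only [bsg_flip]
  split_ifs with h
  · rw [← Finset.mul_prod_erase I _ h, ← Finset.mul_prod_erase I (bsg w) h]
    simp only [if_true, neg_mul, neg_inj]
    congr 1
    refine Finset.prod_congr rfl fun x hx => ?_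
    rw [if_neg (Finset.ne_of_mem_erase hx).symm]
  · refine Finset.prod_congr rfl fun x hx => ?_
    rw [if_neg]; rintro rfl; exact h hx

abbrev Fk := ℕ →₀ ℚ

/-- basis vectors -/
def dl (w : ℕ) : Fk := Finsupp.single w 1

/-- Jordan–Wigner sign -/
def jw (k w : ℕ) : ℚ := chi (Finset.range k) w

/-- annihilation -/
def cA (k : ℕ) : Module.End ℚ Fk :=
  Finsupp.linearCombination ℚ (fun w => if w.testBit k then jw k w • dl (w ^^^ 2 ^ k) else 0)

/-- creation -/
def cC (k : ℕ) : Module.End ℚ Fk :=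
  Finsupp.linearCombination ℚ (fun w => if w.testBit k then 0 else jw k w • dl (w ^^^ 2 ^ k))

theorem cA_dl (k w : ℕ) : cA k (dl w) = if w.testBit k then jw k w • dl (w ^^^ 2 ^ k) else 0 := by
  simp [cA, dl]

theorem cC_dl (k w : ℕ) : cC k (dl w) = if w.testBit k then 0 else jw k w • dl (w ^^^ 2 ^ k) := by
  simp [cC, dl]

theorem fk_ext {M : Type*} [AddCommMonoid M] [Module ℚ M] {f g : Fk →ₗ[ℚ] M}
    (h : ∀ w, f (dl w) = g (dl w)) : f = g := by
  ext w; exact h w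

theorem jw_flip (j k w : ℕ) : jw j (w ^^^ 2 ^ k) = if k < j then - jw j w else jw j w := by
  unfold jw; rw [chi_flip]; simp

theorem xor_comm3 (w a b : ℕ) : w ^^^ a ^^^ b = w ^^^ b ^^^ a := by
  rw [Nat.xor_assoc, Nat.xor_comm a b, ← Nat.xor_assoc]

theorem xor_self3 (w a : ℕ) : w ^^^ a ^^^ a = w := by
  rw [Nat.xor_assoc, Nat.xor_self, Nat.xor_zero]

theorem jw_sq (k w : ℕ) : jw k w * jw k w = 1 := chi_sq _ _

theorem fock_car : CAR cA cC where
  c2 i := by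
    refine fk_ext fun w => ?_
    simp only [Module.End.mul_apply, cA_dl, LinearMap.zero_apply]
    cases h : w.testBit i <;> simp [cA_dl, testBit_flip, h]
  d2 i := by
    refine fk_ext fun w => ?_
    simp only [Module.End.mul_apply, cC_dl, LinearMap.zero_apply]
    cases h : w.testBit i <;> simp [cC_dl, testBit_flip, h]
  cd1 i := by
    refine fk_ext fun w => ?_
    simp only [Module.End.mul_apply, cA_dl, cC_dl, LinearMap.sub_apply, Module.End.one_apply]
    cases h : w.testBit i <;>
      simp [cA_dl, cC_dl, testBit_flip, h, jw_flip, smul_smul, jw_sq, xor_self3]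
  cc i j := by
    refine fk_ext fun w => ?_
    simp only [Module.End.mul_apply, cA_dl, LinearMap.neg_apply]
    rcases lt_trichotomy i j with h | h | h
    · cases h1 : w.testBit i <;> cases h2 : w.testBit j <;>
        simp [cA_dl, testBit_flip, h1, h2, jw_flip, smul_smul, h, h.ne, h.ne', not_lt_of_gt h,
          xor_comm3 w (2^i), mul_comm (jw i w)]
    · subst h
      cases h1 : w.testBit i <;> simp [cA_dl, testBit_flip, h1]
    · cases h1 : w.testBit i <;> cases h2 : w.testBit j <;>
        simp [cA_dl, testBit_flip, h1, h2, jw_flip, smul_smul, h, h.ne, h.ne', not_lt_of_gt h,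
          xor_comm3 w (2^i), mul_comm (jw i w)]
  dd i j := by
    refine fk_ext fun w => ?_
    simp only [Module.End.mul_apply, cC_dl, LinearMap.neg_apply]
    rcases lt_trichotomy i j with h | h | h
    · cases h1 : w.testBit i <;> cases h2 : w.testBit j <;>
        simp [cC_dl, testBit_flip, h1, h2, jw_flip, smul_smul, h, h.ne, h.ne', not_lt_of_gt h,
          xor_comm3 w (2^i), mul_comm (jw i w)]
    · subst h
      cases h1 : w.testBit i <;> simp [cC_dl, testBit_flip, h1]
    · cases h1 : w.testBit i <;> cases h2 : w.testBit j <;>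
        simp [cC_dl, testBit_flip, h1, h2, jw_flip, smul_smul, h, h.ne, h.ne', not_lt_of_gt h,
          xor_comm3 w (2^i), mul_comm (jw i w)]
  cd i j hij := by
    refine fk_ext fun w => ?_
    simp only [Module.End.mul_apply, cA_dl, cC_dl, LinearMap.neg_apply]
    rcases lt_or_gt_of_ne hij with h | h
    · cases h1 : w.testBit i <;> cases h2 : w.testBit j <;>
        simp [cA_dl, cC_dl, testBit_flip, h1, h2, jw_flip, smul_smul, h, h.ne, h.ne',
          not_lt_of_gt h, xor_comm3 w (2^i), mul_comm (jw i w)]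
    · cases h1 : w.testBit i <;> cases h2 : w.testBit j <;>
        simp [cA_dl, cC_dl, testBit_flip, h1, h2, jw_flip, smul_smul, h, h.ne, h.ne',
          not_lt_of_gt h, xor_comm3 w (2^i), mul_comm (jw i w)]

/-! ### Moves of the half-spin representation -/

def lo (j : ℕ) : ℕ := if j = 9 then 0 else j
def hi (j : ℕ) : ℕ := if j = 9 then 1 else j + 1
def mk (j : ℕ) : ℕ := 2 ^ lo j ^^^ 2 ^ hi j

/-- move `j` is allowed at `w` -/
def al (j w : ℕ) : Bool := (w.testBit (lo j) == !(j == 9)) && !(w.testBit (hi j))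

/-- the simple raising operators -/
def qop (j : ℕ) : Module.End ℚ Fk := if j = 9 then cC 0 * cC 1 else cC (j+1) * cA j

theorem lo_ne_hi (j : ℕ) : lo j ≠ hi j := by unfold lo hi; split <;> omega

theorem flip_mk (w j : ℕ) : w ^^^ mk j = w ^^^ 2 ^ lo j ^^^ 2 ^ hi j := by
  unfold mk; rw [Nat.xor_assoc]

theorem jw_succ (j w : ℕ) : jw (j+1) w = jw j w * bsg w j := by
  unfold jw chi; rw [Finset.prod_range_succ]

theorem qop_dl (j w : ℕ) : qop j (dl w) = if al j w then dl (w ^^^ mk j) else 0 := by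
  rw [flip_mk]
  by_cases h : j = 9
  · subst h
    have e0 : jw 0 w = 1 := by simp [jw, chi]
    have e1 : jw 1 w = bsg w 0 := by simp [jw, chi]
    have e2 : jw 0 (w ^^^ 2) = 1 := by simp [jw, chi]
    have f := testBit_flip w 1 0
    simp only [pow_one] at f
    simp only [qop, if_true, Module.End.mul_apply, cC_dl, al, lo, hi]
    cases h1 : w.testBit 0 <;> cases h2 : w.testBit 1 <;>
      simp [cC_dl, f, h1, h2, e1, e2, bsg, xor_comm3 w 1]
  · simp only [qop, h, if_false, Module.End.mul_apply, cA_dl, al, lo, hi]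
    cases h1 : w.testBit j <;> cases h2 : w.testBit (j+1) <;>
      simp [cC_dl, testBit_flip, h1, h2, h, jw_flip, smul_smul, jw_succ, jw_sq, bsg_flip]
    simp [← mul_assoc, jw_sq, bsg, h1]

def evs : Finset ℕ := (Finset.range 1024).filter (fun w => chi (Finset.range 10) w = 1)

/-- sign of a weight -/
def sgw (w : ℕ) : ℚ := chi {1, 3, 5, 7, 9} w

theorem chi_mk (I : Finset ℕ) (w j : ℕ) : chi I (w ^^^ mk j) =
    (if lo j ∈ I then -1 else 1) * (if hi j ∈ I then -1 else 1) * chi I w := by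
  rw [flip_mk, chi_flip, chi_flip]; split_ifs <;> simp

theorem sgw_mk (w j : ℕ) (hj : j < 10) : sgw (w ^^^ mk j) = - sgw w := by
  unfold sgw
  rw [chi_mk]
  interval_cases j <;> simp [lo, hi]

theorem mk_lt (j : ℕ) (hj : j < 10) : mk j < 1024 := by
  interval_cases j <;> decide

theorem evs_mk (w j : ℕ) (hj : j < 10) (hw : w ∈ evs) : w ^^^ mk j ∈ evs := by
  unfold evs at *
  simp only [Finset.mem_filter, Finset.mem_range] at *
  refine ⟨Nat.xor_lt_two_pow (n := 10) hw.1 (mk_lt j hj), ?_⟩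
  rw [chi_mk, hw.2]
  interval_cases j <;> simp [lo, hi]

theorem testBit_1023 (k : ℕ) : Nat.testBit 1023 k = decide (k < 10) := Nat.testBit_two_pow_sub_one 10 k

theorem bsg_compl (w k : ℕ) (hk : k < 10) : bsg (1023 ^^^ w) k = - bsg w k := by
  unfold bsg; rw [Nat.testBit_xor, testBit_1023]; cases w.testBit k <;> simp [hk]

theorem chi_compl (I : Finset ℕ) (hI : I ⊆ Finset.range 10) (w : ℕ) :
    chi I (1023 ^^^ w) = (-1) ^ I.card * chi I w := by
  unfold chi
  rw [Finset.prod_congr rfl (g := fun k => (-1) * bsg w k), Finset.prod_mul_distrib,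
    Finset.prod_const]
  intro k hk
  rw [bsg_compl w k (by simpa using hI hk)]; ring

theorem evs_compl (w : ℕ) (hw : w ∈ evs) : 1023 ^^^ w ∈ evs := by
  unfold evs at *
  simp only [Finset.mem_filter, Finset.mem_range] at *
  refine ⟨Nat.xor_lt_two_pow (n := 10) (by norm_num) hw.1, ?_⟩
  rw [chi_compl _ subset_rfl, hw.2]; simp; norm_num

theorem sgw_compl (w : ℕ) : sgw (1023 ^^^ w) = - sgw w := by
  unfold sgw
  rw [chi_compl _ (by decide)]
  have : Finset.card ({1, 3, 5, 7, 9} : Finset ℕ) = 5 := by decide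
  rw [this]; ring

theorem al_compl (j w : ℕ) (hj : j < 10) : al j (1023 ^^^ (w ^^^ mk j)) = al j w := by
  unfold al
  simp only [Nat.testBit_xor, testBit_1023, mk, Nat.testBit_two_pow]
  have h1 : lo j < 10 := by unfold lo; split <;> omega
  have h2 : ∀ j < 10, hi j < 10 ∨ j = 9 := by unfold hi; intro j _; split <;> omega
  have h3 : hi j ≤ 9 ∨ hi j = 10 := by unfold hi; split <;> omega
  have h := lo_ne_hi j
  have h2 : hi j < 10 := by unfold hi; split <;> omega
  cases h5 : w.testBit (lo j) <;> cases h6 : w.testBit (hi j) <;> simp [h, h1, h2, h.symm]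

/-! ### The minuscule lemma -/

/-- adjacency of the moves in the Dynkin diagram of `D10` -/
def adj (i j : ℕ) : Bool :=
  ((i + 1 == j) && Nat.ble j 8) || ((j + 1 == i) && Nat.ble i 8) || ((i == 9) && (j == 1)) ||
    ((i == 1) && (j == 9))

def canonAux (w : ℕ) : ℕ → ℕ
  | 0 => 0
  | (n + 1) => bif al n (w ^^^ mk n) then n else canonAux w n

/-- a move leading to `w` -/
def canon (w : ℕ) : ℕ := canonAux w 10

def prv (w : ℕ) : ℕ := w ^^^ mk (canon w)

def par (w : ℕ) : ℕ → Bool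
  | 0 => false
  | (n + 1) => xor (w.testBit n) (par w n)

def chkA (w i : ℕ) : Bool :=
  let w' := w ^^^ mk i
  let j := canon w'
  (j == i) || (!adj i j && !adj j i && al j (w ^^^ mk j) && al i (w ^^^ mk j) &&
    Nat.blt (w ^^^ mk j) w)

def chkB (w i : ℕ) : Bool :=
  let j := canon w
  let u := w ^^^ mk j
  bif j == i then (bif u == 0 then i == 9 else
    let k := canon u
    let t := u ^^^ mk k
    Nat.blt t w && Nat.blt k 10 && !(k == i) && al k t &&
    bif adj i k then !al i t else !adj k i && al i t && !al i (t ^^^ mk i) && Nat.blt (t ^^^ mk i) w)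
  else bif adj i j then !al i u && al i (u ^^^ mk i) && !al j (u ^^^ mk i) && Nat.blt (u ^^^ mk i) w
  else !adj j i && !al i u

def chk (w i : ℕ) : Bool :=
  (w == 0 || (Nat.blt (canon w) 10 && al (canon w) (prv w) && Nat.blt (prv w) w)) &&
  bif al i w then chkA w i else ((w == 0) || chkB w i)

def allB (p : ℕ → Bool) : ℕ → Bool
  | 0 => true
  | (n + 1) => p n && allB p n

theorem allB_spec (p : ℕ → Bool) (n : ℕ) (h : allB p n = true) (k : ℕ) (hk : k < n) :
    p k = true := by
  induction n with
  | zero => omega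
  | succ n ih =>
    simp only [allB, Bool.and_eq_true] at h
    rcases Nat.lt_succ_iff_lt_or_eq.1 hk with h1 | h1
    · exact ih h.2 h1
    · rw [h1]; exact h.1

set_option maxRecDepth 100000 in
theorem chk_all : allB (fun w => par w 10 || allB (chk w) 10) 1024 = true := by
  decide +kernel

theorem par_chi (w n : ℕ) : chi (Finset.range n) w = if par w n then -1 else 1 := by
  induction n with
  | zero => simp [chi, par]
  | succ n ih =>
    unfold chi at *
    rw [Finset.prod_range_succ, ih, par, bsg]
    cases w.testBit n <;> cases par w n <;> simp

theorem evs_iff (w : ℕ) : w ∈ evs ↔ w < 1024 ∧ par w 10 = false := by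
  unfold evs
  rw [Finset.mem_filter, par_chi, Finset.mem_range]
  cases par w 10 <;> norm_num

theorem chk_evs (w : ℕ) (hw : w ∈ evs) (i : ℕ) (hi : i < 10) : chk w i = true := by
  rw [evs_iff] at hw
  have := allB_spec _ _ chk_all w hw.1
  simp only [hw.2, Bool.false_or] at this
  exact allB_spec _ _ this i hi

theorem adj_symm (i j : ℕ) : adj i j = adj j i := by
  unfold adj
  rw [Bool.eq_iff_iff]; simp; tauto

section minuscule
variable {M : Type*} [AddCommGroup M] [Module ℚ M] (a : ℕ → Module.End ℚ M) (v0 : M)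

def sAux : ℕ → ℕ → M
  | 0, _ => v0
  | (n + 1), w => if w = 0 then v0 else a (canon w) (sAux n (prv w))

def sv (w : ℕ) : M := sAux a v0 w w

theorem prv_lt (w : ℕ) (hw : w ∈ evs) (h0 : w ≠ 0) :
    canon w < 10 ∧ al (canon w) (prv w) = true ∧ prv w < w ∧ prv w ∈ evs := by
  have h := chk_evs w hw 0 (by norm_num)
  simp only [chk, Bool.and_eq_true, Bool.or_eq_true, beq_iff_eq, h0, false_or, Nat.blt_eq] at h
  exact ⟨h.1.1.1, h.1.1.2, h.1.2, evs_mk _ _ h.1.1.1 hw⟩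

theorem sAux_stable (n w : ℕ) (hw : w ∈ evs) (h : w ≤ n) : sAux a v0 n w = sv a v0 w := by
  induction w using Nat.strong_induction_on generalizing n with
  | _ w ih =>
    by_cases h0 : w = 0
    · subst h0; unfold sv; cases n <;> simp [sAux]
    obtain ⟨h1, h2, h3, h4⟩ := prv_lt w hw h0
    obtain ⟨m, rfl⟩ : ∃ m, n = m + 1 := ⟨n - 1, by omega⟩
    obtain ⟨k, hk⟩ : ∃ k, w = k + 1 := ⟨w - 1, by omega⟩
    have : sv a v0 w = a (canon w) (sAux a v0 k (prv w)) := by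
      unfold sv
      conv_lhs => rw [show sAux a v0 w w = sAux a v0 (k + 1) w by rw [← hk]]
      rw [sAux, if_neg h0]
    rw [this, sAux, if_neg h0, ih _ h3 m h4 (by omega), ih _ h3 k h4 (by omega)]

theorem sv_zero : sv a v0 0 = v0 := rfl

theorem sv_rec (w : ℕ) (hw : w ∈ evs) (h0 : w ≠ 0) : sv a v0 w = a (canon w) (sv a v0 (prv w)) := by
  obtain ⟨h1, h2, h3, h4⟩ := prv_lt w hw h0
  rw [← sAux_stable a v0 (w + 1) w hw (by omega), sAux, if_neg h0, sAux_stable _ _ _ _ h4 h3.le]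

theorem minuscule
    (hc : ∀ i < 10, ∀ j < 10, i ≠ j → adj i j = false → ∀ x, a i (a j x) = a j (a i x))
    (hs : ∀ i < 10, ∀ j < 10, adj i j = true → ∀ x,
      a i (a i (a j x)) - (2 : ℚ) • a i (a j (a i x)) + a j (a i (a i x)) = 0)
    (h0 : ∀ i < 9, a i v0 = 0) (h9 : a 9 (a 9 v0) = 0) (w : ℕ) (hw : w ∈ evs) :
    ∀ i < 10, a i (sv a v0 w) = if al i w then sv a v0 (w ^^^ mk i) else 0 := by
  induction w using Nat.strong_induction_on with
  | _ w ih =>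
  intro i hi
  have hck := chk_evs w hw i hi
  cases hal : al i w with
  | true =>
    simp only [if_true]
    have hw' := evs_mk w i hi hw
    have hw0 : w ^^^ mk i ≠ 0 := by
      intro h
      have : w = mk i := Nat.xor_eq_zero_iff.1 h
      subst this
      revert hal
      interval_cases i <;> decide
    obtain ⟨h1, h2, h3, h4⟩ := prv_lt _ hw' hw0
    rw [sv_rec a v0 _ hw' hw0]
    simp only [chk, hal, chkA, cond_true, Bool.and_eq_true, Bool.or_eq_true, beq_iff_eq, Nat.blt_eq,
      Bool.not_eq_true'] at hck
    rcases hck.2 with h | ⟨⟨⟨⟨g1, g2⟩, g3⟩, g4⟩, g5⟩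
    · rw [prv, h, xor_self3]
    · unfold prv
      generalize hj : canon (w ^^^ mk i) = j at *
      have ht := evs_mk w j h1 hw
      have e1 := ih _ g5 ht j h1
      have e2 := ih _ g5 ht i hi
      rw [g3, xor_self3, if_pos rfl] at e1
      rw [g4, if_pos rfl] at e2
      by_cases hij : i = j
      · subst hij; rw [xor_self3]
      rw [← e1, hc i hi j h1 hij g1, e2, xor_comm3]
  | false =>
    simp only [Bool.false_eq_true, if_false]
    by_cases hw0 : w = 0
    · subst hw0
      rw [sv_zero]
      apply h0
      by_contra h
      have : i = 9 := by omega
      subst this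
      revert hal; decide
    obtain ⟨h1, h2, h3, h4⟩ := prv_lt _ hw hw0
    simp only [chk, hal, chkB, cond_false, Bool.and_eq_true, Bool.or_eq_true, beq_iff_eq, hw0,
      false_or] at hck
    have hck := hck.2
    rw [sv_rec a v0 w hw hw0]
    have hu : w ^^^ mk (canon w) = prv w := rfl
    rw [hu] at hck
    generalize hj : canon w = j at *
    generalize prv w = u at *
    by_cases hji : j = i
    · subst hji
      simp only [beq_self_eq_true, cond_true] at hck
      by_cases hu0 : u = 0
      · subst hu0
        simp only [beq_self_eq_true, cond_true, beq_iff_eq] at hck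
        subst hck
        exact h9
      have hu0' : (u == 0) = false := by simpa using hu0
      simp only [hu0', cond_false, Bool.and_eq_true, Nat.blt_eq, Bool.not_eq_true',
        beq_eq_false_iff_ne] at hck
      rw [sv_rec a v0 u h4 hu0, prv]
      generalize hk : canon u = k at *
      obtain ⟨⟨⟨⟨g1, g2⟩, g3⟩, g4⟩, g5⟩ := hck
      have ht := evs_mk u k g2 h4
      generalize u ^^^ mk k = t at *
      have e1 := ih _ g1 ht j hi
      cases ha : adj j k with
      | true =>
        rw [ha, cond_true, Bool.not_eq_true'] at g5
        rw [g5, if_neg (by simp)] at e1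
        have := hs j hi k g2 ha (sv a v0 t)
        rw [e1] at this
        simpa using this
      | false =>
        rw [ha] at g5
        simp only [cond_false, Bool.and_eq_true, Nat.blt_eq, Bool.not_eq_true'] at g5
        rw [hc j hi k g2 (Ne.symm g3) ha, hc j hi k g2 (Ne.symm g3) ha, e1, g5.1.1.2, if_pos rfl,
          ih _ g5.2 (evs_mk t j hi ht) j hi, g5.1.2, if_neg (by simp), map_zero]
    · have hji' : (j == i) = false := by simpa using hji
      simp only [hji', cond_false] at hck
      cases ha : adj i j with
      | true =>
        simp only [ha, cond_true, Bool.and_eq_true, Nat.blt_eq, Bool.not_eq_true'] at hck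
        obtain ⟨⟨⟨g1, g2⟩, g3⟩, g4⟩ := hck
        have ht := evs_mk u i hi h4
        have e1 := ih _ g4 ht i hi
        have e2 := ih _ g4 ht j h1
        have e3 := ih _ h3 h4 i hi
        rw [g2, if_pos rfl, xor_self3] at e1
        rw [g3, if_neg (by simp)] at e2
        rw [g1, if_neg (by simp)] at e3
        have := hs i hi j h1 ha (sv a v0 (u ^^^ mk i))
        rw [e2, e1, e3] at this
        simpa using this
      | false =>
        simp only [ha, cond_false, Bool.and_eq_true, Bool.not_eq_true'] at hck
        rw [hc i hi j h1 (Ne.symm hji) ha, ih _ h3 h4 i hi, hck.2, if_neg (by simp), map_zero]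

end minuscule

/-! ### Upper bound for the span of the brackets -/

def uop (a : ℕ) : Module.End ℚ Fk := 2 * (cC a * cA a) - 1

theorem uop_dl (a w : ℕ) : uop a (dl w) = (- bsg w a) • dl w := by
  have h2 : (2 : Module.End ℚ Fk) = (2 : ℚ) • 1 := by
    ext; simp [← one_add_one_eq_two]
  unfold uop
  rw [h2]
  simp only [LinearMap.sub_apply, smul_mul_assoc, one_mul, LinearMap.smul_apply,
    Module.End.mul_apply, cA_dl, Module.End.one_apply]
  cases h : w.testBit a
  · simp [bsg, h]
  · simp [cC_dl, testBit_flip, h, jw_flip, smul_smul, jw_sq, xor_self3, bsg, two_smul]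

def J46 : Finset (Finset ℕ) :=
  (Finset.range 10).powersetCard 0 ∪ (Finset.range 10).powersetCard 2

theorem J46_card : J46.card = 46 := by
  unfold J46
  rw [Finset.card_union_of_disjoint, Finset.card_powersetCard, Finset.card_powersetCard]
  · simp; decide
  · rw [Finset.disjoint_left]
    intro a h1 h2
    rw [Finset.mem_powersetCard] at h1 h2
    omega

theorem chi_insert {a : ℕ} {I : Finset ℕ} (h : a ∉ I) (w : ℕ) :
    chi (insert a I) w = bsg w a * chi I w := by
  unfold chi; rw [Finset.prod_insert h]

theorem chi_sdiff {I : Finset ℕ} (h : I ⊆ Finset.range 10) (w : ℕ) (hw : w ∈ evs) :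
    chi (Finset.range 10 \ I) w = chi I w := by
  have h1 : chi (Finset.range 10 \ I) w * chi I w = 1 := by
    have : chi (Finset.range 10) w = 1 := (Finset.mem_filter.1 hw).2
    rw [← this]
    exact Finset.prod_sdiff h
  have h2 := chi_sq I w
  have h3 : chi I w ≠ 0 := by intro h; rw [h] at h2; simp at h2
  exact mul_right_cancel₀ h3 (h1.trans h2.symm)

theorem cube_fourier (w v : ℕ) (hw : w < 1024) (hv : v < 1024) :
    ∑ I ∈ (Finset.range 10).powerset, chi I w * chi I v = if w = v then 1024 else 0 := by
  have h1 : ∑ I ∈ (Finset.range 10).powerset, chi I w * chi I v =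
      ∏ k ∈ Finset.range 10, (1 + bsg w k * bsg v k) := by
    rw [Finset.prod_one_add]
    refine Finset.sum_congr rfl fun I _ => ?_
    unfold chi; rw [Finset.prod_mul_distrib]
  rw [h1]
  split_ifs with h
  · subst h
    simp only [bsg_sq]
    simp; norm_num
  · have : ∃ k, w.testBit k ≠ v.testBit k := by
      by_contra hh
      push Not at hh
      exact h (Nat.eq_of_testBit_eq hh)
    obtain ⟨k, hk⟩ := this
    have hk10 : k < 10 := by
      by_contra hk10
      have e : 1024 ≤ 2 ^ k := by
        calc 1024 = 2 ^ 10 := by norm_num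
          _ ≤ 2 ^ k := Nat.pow_le_pow_right (by norm_num) (by omega)
      rw [Nat.testBit_lt_two_pow (by omega), Nat.testBit_lt_two_pow (by omega)] at hk
      exact hk rfl
    refine Finset.prod_eq_zero (Finset.mem_range.2 hk10) ?_
    unfold bsg
    revert hk
    cases w.testBit k <;> cases v.testBit k <;> simp

def flips : List ℕ → ℕ → ℕ
  | [], w => w
  | (k :: l), w => flips l w ^^^ 2 ^ k

theorem cprod_dl (l : List ℕ) (hl : l.Nodup) (w : ℕ) :
    ∃ r : ℚ, (l.map cA).prod (dl w) = r • dl (flips l w) ∧ (r ≠ 0 → ∀ k ∈ l, w.testBit k = true)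
      ∧ ∀ k, k ∉ l → (flips l w).testBit k = w.testBit k := by
  induction l with
  | nil => exact ⟨1, by simp [flips], by simp, by simp [flips]⟩
  | cons k l ih =>
    rw [List.nodup_cons] at hl
    obtain ⟨r, h1, h2, h3⟩ := ih hl.2
    rw [List.map_cons, List.prod_cons, Module.End.mul_apply, h1, map_smul, cA_dl, h3 k hl.1]
    have h4 : ∀ m, m ∉ k :: l → (flips (k :: l) w).testBit m = w.testBit m := by
      intro m hm
      rw [List.mem_cons, not_or] at hm
      rw [flips, testBit_flip, h3 m hm.2]
      simp [Ne.symm hm.1]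
    cases h : w.testBit k
    · exact ⟨0, by simp, by simp, h4⟩
    · refine ⟨r * jw k (flips l w), by simp [smul_smul, flips], ?_, h4⟩
      intro hr m hm
      rcases List.mem_cons.1 hm with rfl | hm
      · exact h
      · exact h2 (left_ne_zero_of_mul hr) m hm

theorem top_bits : allB (fun w => !(([2,3,4,5,6,7,8,9] : List ℕ).all fun k => w.testBit k) ||
    (par w 10 || (((flips [2,3,4,5,6,7,8,9] w == 0) && (w == 1020)) ||
      ((flips [2,3,4,5,6,7,8,9] w == 3) && (w == 1023))))) 1024 = true := by
  decide +kernel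

section
variable {L : Type*} [LieRing L] [LieAlgebra ℚ L] (s : ℕ → L)

def sig : Fk →ₗ[ℚ] L := Finsupp.linearCombination ℚ (fun w => if w ∈ evs then s w else 0)

theorem sig_dl (w : ℕ) : sig s (dl w) = if w ∈ evs then s w else 0 := by
  simp [sig, dl]

def Phi : Module.End ℚ Fk →ₗ[ℚ] L where
  toFun c := ∑ w ∈ evs, sgw w • ⁅sig s (c (dl w)), s (1023 ^^^ w)⁆
  map_add' c c' := by
    simp [add_lie, smul_add, Finset.sum_add_distrib]
  map_smul' r c := by
    simp [smul_lie, Finset.smul_sum, smul_comm r]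

def Gv (I : Finset ℕ) : L := ∑ w ∈ evs, (chi I w * sgw w) • ⁅s w, s (1023 ^^^ w)⁆

theorem sig_qop (e : L) (j : ℕ) (hj : j < 10)
    (he : ∀ w ∈ evs, ⁅e, s w⁆ = if al j w then s (w ^^^ mk j) else 0) (v : Fk) :
    sig s (qop j v) = ⁅e, sig s v⁆ := by
  have : sig s ∘ₗ qop j = (LieAlgebra.ad ℚ L e : L →ₗ[ℚ] L) ∘ₗ sig s := by
    refine fk_ext fun w => ?_
    simp only [LinearMap.comp_apply, qop_dl, sig_dl, LieAlgebra.ad_apply]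
    by_cases hw : w ∈ evs
    · rw [if_pos hw, he w hw]
      split_ifs
      · rw [sig_dl, if_pos (evs_mk w j hj hw)]
      · simp
    · have hw' : w ^^^ mk j ∉ evs := by
        intro h
        have := evs_mk _ j hj h
        rw [xor_self3] at this
        exact hw this
      rw [if_neg hw, lie_zero]
      split_ifs
      · rw [sig_dl, if_neg hw']
      · simp
  exact LinearMap.congr_fun this v

theorem Phi_qop (e : L) (j : ℕ) (hj : j < 10)
    (he : ∀ w ∈ evs, ⁅e, s w⁆ = if al j w then s (w ^^^ mk j) else 0) (c : Module.End ℚ Fk) :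
    Phi s (qop j * c - c * qop j) = ⁅e, Phi s c⁆ := by
  have h1 : Phi s (c * qop j) =
      ∑ w ∈ evs, - (sgw w • ⁅sig s (c (dl w)), ⁅e, s (1023 ^^^ w)⁆⁆) := by
    simp only [Phi, LinearMap.coe_mk, AddHom.coe_mk, Module.End.mul_apply]
    refine Finset.sum_nbij' (fun w => w ^^^ mk j) (fun w => w ^^^ mk j) ?_ ?_ ?_ ?_ ?_
    · exact fun w hw => evs_mk w j hj hw
    · exact fun w hw => evs_mk w j hj hw
    · exact fun w _ => xor_self3 _ _
    · exact fun w _ => xor_self3 _ _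
    · intro w hw
      rw [qop_dl, he _ (evs_compl _ (evs_mk w j hj hw)), al_compl j w hj, sgw_mk w j hj]
      split_ifs
      · rw [Nat.xor_assoc 1023, xor_self3]
        simp
      · simp
  have h2 : Phi s (qop j * c) =
      ∑ w ∈ evs, (sgw w • ⁅⁅e, sig s (c (dl w))⁆, s (1023 ^^^ w)⁆) := by
    simp only [Phi, LinearMap.coe_mk, AddHom.coe_mk, Module.End.mul_apply,
      sig_qop s e j hj he]
  rw [map_sub, h1, h2, ← Finset.sum_sub_distrib]
  simp only [Phi, LinearMap.coe_mk, AddHom.coe_mk, lie_sum, lie_smul]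
  refine Finset.sum_congr rfl fun w _ => ?_
  rw [sub_neg_eq_add, ← smul_add, leibniz_lie e]

variable (e : ℕ → L)
  (he : ∀ j < 10, ∀ w ∈ evs, ⁅e j, s w⁆ = if al j w then s (w ^^^ mk j) else 0)
  (h03 : ⁅s 0, s 3⁆ = 0)

include he in
theorem AdK_qop (j : ℕ) (hj : j < 10) : AdK (LinearMap.ker (Phi s)) (qop j) := by
  intro y hy
  rw [LinearMap.mem_ker] at *
  rw [Phi_qop s (e j) j hj (he j hj), hy, lie_zero]

include h03 in
theorem top_mem : (([2,3,4,5,6,7,8,9] : List ℕ).map cA).prod ∈ LinearMap.ker (Phi s) := by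
  rw [LinearMap.mem_ker]
  simp only [Phi, LinearMap.coe_mk, AddHom.coe_mk]
  refine Finset.sum_eq_zero fun w hw => ?_
  obtain ⟨r, h1, h2, h3⟩ := cprod_dl [2,3,4,5,6,7,8,9] (by decide) w
  rw [h1]
  by_cases hr : r = 0
  · simp [hr]
  have h4 := allB_spec _ _ top_bits w ((evs_iff w).1 hw).1
  have h5 : (([2,3,4,5,6,7,8,9] : List ℕ).all fun k => w.testBit k) = true := by
    rw [List.all_eq_true]; exact h2 hr
  simp only [h5, ((evs_iff w).1 hw).2, Bool.not_true, Bool.false_or, Bool.or_eq_true,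
    Bool.and_eq_true, beq_iff_eq] at h4
  have h30 : ⁅s 3, s 0⁆ = 0 := by rw [← lie_skew, h03, neg_zero]
  rcases h4 with ⟨h4, rfl⟩ | ⟨h4, rfl⟩
  · rw [h4, map_smul, sig_dl, smul_lie, show 1023 ^^^ 1020 = 3 from rfl]
    split_ifs <;> simp [h03]
  · rw [h4, map_smul, sig_dl, smul_lie, show 1023 ^^^ 1023 = 0 from rfl]
    split_ifs <;> simp [h30]

include he h03 in
theorem Gv_four (I : Finset ℕ) (hI : I ⊆ Finset.range 10) (h4 : I.card = 4) : Gv s I = 0 := by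
  obtain ⟨x1, I1, n1, rfl, c1⟩ := Finset.card_eq_succ.1 h4
  obtain ⟨x2, I2, n2, rfl, c2⟩ := Finset.card_eq_succ.1 c1
  obtain ⟨x3, I3, n3, rfl, c3⟩ := Finset.card_eq_succ.1 c2
  obtain ⟨x4, I4, n4, rfl, c4⟩ := Finset.card_eq_succ.1 c3
  rw [Finset.card_eq_zero] at c4
  subst c4
  have hm := car_main fock_car (K := LinearMap.ker (Phi s))
    (by have := AdK_qop s e he 9 (by norm_num); simpa [qop] using this)
    (fun k hk => by
      have := AdK_qop s e he k (by omega)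
      rwa [qop, if_neg (by omega)] at this)
    (top_mem s h03) uop (fun a => rfl) x1 x2 x3 x4
    (by simp at n1 n2 n3 n4 ⊢; tauto)
    (by
      intro x hx
      have : x ∈ Finset.range 10 := hI (by simpa using hx)
      simpa using this)
  rw [LinearMap.mem_ker] at hm
  rw [← hm]
  simp only [Phi, LinearMap.coe_mk, AddHom.coe_mk, Gv]
  refine Finset.sum_congr rfl fun w hw => ?_
  have e1 : (uop x1 * uop x2 * uop x3 * uop x4) (dl w) =
      (chi (insert x1 (insert x2 (insert x3 (insert x4 ∅)))) w) • dl w := by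
    rw [chi_insert n1, chi_insert n2, chi_insert n3, chi_insert n4]
    simp only [Module.End.mul_apply, uop_dl, map_smul, smul_smul, chi, Finset.prod_empty]
    refine congrArg (fun r : ℚ => r • dl w) ?_; ring
  rw [e1, map_smul, sig_dl, if_pos hw, smul_lie, smul_smul, mul_comm]

theorem xor_compl2 (w : ℕ) : 1023 ^^^ (1023 ^^^ w) = w := by
  rw [← Nat.xor_assoc, Nat.xor_self, Nat.zero_xor]

theorem Gv_odd (I : Finset ℕ) (hI : I ⊆ Finset.range 10) (h : Odd I.card) : Gv s I = 0 := by
  have : Gv s I = - Gv s I := by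
    conv_lhs => unfold Gv
    unfold Gv
    rw [← Finset.sum_neg_distrib]
    refine Finset.sum_nbij' (fun w => 1023 ^^^ w) (fun w => 1023 ^^^ w) ?_ ?_ ?_ ?_ ?_
    · exact fun w hw => evs_compl w hw
    · exact fun w hw => evs_compl w hw
    · intro w _; exact xor_compl2 w
    · intro w _; exact xor_compl2 w
    · intro w hw
      rw [xor_compl2, sgw_compl, chi_compl I hI, h.neg_one_pow, ← lie_skew (s w), smul_neg]
      simp
  have h2 : (2 : ℚ) • Gv s I = 0 := by rw [two_smul]; nth_rewrite 1 [this]; simp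
  exact (smul_eq_zero.1 h2).resolve_left (by norm_num)

theorem Gv_sdiff (I : Finset ℕ) (hI : I ⊆ Finset.range 10) : Gv s (Finset.range 10 \ I) = Gv s I := by
  unfold Gv
  refine Finset.sum_congr rfl fun w hw => ?_
  rw [chi_sdiff hI w hw]

include he h03 in
theorem Gv_mem (I : Finset ℕ) (hI : I ⊆ Finset.range 10) :
    Gv s I ∈ Submodule.span ℚ (Gv s '' (J46 : Set (Finset ℕ))) := by
  have hc : (Finset.range 10 \ I).card = 10 - I.card := by
    rw [Finset.card_sdiff_of_subset hI, Finset.card_range]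
  have hs : Finset.range 10 \ I ⊆ Finset.range 10 := Finset.sdiff_subset
  have h10 : I.card ≤ 10 := by simpa using Finset.card_le_card hI
  have key : ∀ J : Finset ℕ, J ⊆ Finset.range 10 → (J.card = 0 ∨ J.card = 2) →
      Gv s J ∈ Submodule.span ℚ (Gv s '' (J46 : Set (Finset ℕ))) := by
    intro J hJ h
    refine Submodule.subset_span ⟨J, ?_, rfl⟩
    simp only [J46, Finset.coe_union, Set.mem_union, Finset.mem_coe, Finset.mem_powersetCard]
    tauto
  rcases Nat.even_or_odd I.card with h | h
  · by_cases h4 : I.card = 4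
    · rw [Gv_four s e he h03 I hI h4]; exact zero_mem _
    by_cases h6 : I.card = 6
    · rw [← Gv_sdiff s I hI, Gv_four s e he h03 _ hs (by omega)]; exact zero_mem _
    by_cases h2 : I.card ≤ 2
    · exact key I hI (by obtain ⟨m, hm⟩ := h; omega)
    · rw [← Gv_sdiff s I hI]
      exact key _ hs (by obtain ⟨m, hm⟩ := h; omega)
  · rw [Gv_odd s I hI h]; exact zero_mem _

include he h03 in
theorem brk_mem (w : ℕ) (hw : w ∈ evs) :
    ⁅s w, s (1023 ^^^ w)⁆ ∈ Submodule.span ℚ (Gv s '' (J46 : Set (Finset ℕ))) := by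
  have hlt : ∀ v ∈ evs, v < 1024 := fun v hv => ((evs_iff v).1 hv).1
  have h1 : ∑ I ∈ (Finset.range 10).powerset, chi I w • Gv s I =
      (1024 * sgw w) • ⁅s w, s (1023 ^^^ w)⁆ := by
    simp only [Gv, Finset.smul_sum, smul_smul]
    rw [Finset.sum_comm]
    simp only [← Finset.sum_smul, ← mul_assoc, ← Finset.sum_mul]
    rw [Finset.sum_eq_single w]
    · rw [cube_fourier _ _ (hlt w hw) (hlt w hw), if_pos rfl]
    · intro v hv hvw
      rw [cube_fourier _ _ (hlt w hw) (hlt v hv), if_neg (Ne.symm hvw)]; simp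
    · exact fun h => absurd hw h
  have h2 : ⁅s w, s (1023 ^^^ w)⁆ = (sgw w / 1024) •
      ∑ I ∈ (Finset.range 10).powerset, chi I w • Gv s I := by
    rw [h1, smul_smul]
    have : sgw w * sgw w = 1 := chi_sq _ _
    rw [show sgw w / 1024 * (1024 * sgw w) = sgw w * sgw w by ring, this, one_smul]
  rw [h2]
  refine Submodule.smul_mem _ _ (Submodule.sum_mem _ fun I hI => Submodule.smul_mem _ _ ?_)
  exact Gv_mem s e he h03 I (Finset.mem_powerset.1 hI)

end

/-! ### Relations and generation of the Kac-Moody algebra -/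

section rel
variable {B : Type*} [DecidableEq B] (A : Matrix B B ℤ)

/-- quotient map -/
def qmk : FreeLieAlgebra ℚ (Generators B) →ₗ⁅ℚ⁆ Matrix.ToLieAlgebra ℚ A where
  toFun x := LieSubmodule.Quotient.mk (N := Relations.toIdeal ℚ A) x
  map_add' _ _ := rfl
  map_smul' _ _ := rfl
  map_lie' {_ _} := rfl

theorem qmk_of (x : Generators B) : qmk A (FreeLieAlgebra.of ℚ x) = KMgen A x := rfl

theorem qmk_surj (y : Matrix.ToLieAlgebra ℚ A) : ∃ x, qmk A x = y :=
  LieSubmodule.Quotient.surjective_mk' (Relations.toIdeal ℚ A) y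

theorem qmk_zero_iff (x) : qmk A x = 0 ↔ x ∈ Relations.toIdeal ℚ A :=
  LieSubmodule.Quotient.mk_eq_zero (Relations.toIdeal ℚ A)

theorem qmk_rel (x) (h : x ∈ Relations.toSet ℚ A) : qmk A x = 0 := by
  rw [qmk_zero_iff]
  exact LieSubmodule.subset_lieSpan h

theorem rel_hh (i j : B) : ⁅gH A i, gH A j⁆ = 0 := by
  have := qmk_rel A (Relations.HH ℚ (i, j)) (by simp [Relations.toSet])
  simpa [Relations.HH, qmk_of, gH] using this

theorem rel_ef (i j : B) : ⁅gE A i, gF A j⁆ = if i = j then gH A i else 0 := by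
  have := qmk_rel A (Relations.EF ℚ (i, j)) (by simp [Relations.toSet])
  by_cases h : i = j
  · subst h
    simpa [Relations.EF, qmk_of, sub_eq_zero, gE, gF, gH] using this
  · simpa [Relations.EF, qmk_of, h, gE, gF] using this

theorem rel_he (i j : B) : ⁅gH A i, gE A j⁆ = (A i j : ℚ) • gE A j := by
  have := qmk_rel A (Relations.HE ℚ A (i, j)) (by simp [Relations.toSet])
  simp [Relations.HE, qmk_of, sub_eq_zero] at this
  rw [Int.cast_smul_eq_zsmul]
  exact this

theorem rel_hf (i j : B) : ⁅gH A i, gF A j⁆ = -((A i j : ℚ) • gF A j) := by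
  have := qmk_rel A (Relations.HF ℚ A (i, j)) (by simp [Relations.toSet])
  simp [Relations.HF, qmk_of] at this
  rw [Int.cast_smul_eq_zsmul]
  exact eq_neg_of_add_eq_zero_left this

theorem rel_serre (i j : B) :
    ((LieAlgebra.ad ℚ _ (gE A i)) ^ (-A i j).toNat) ⁅gE A i, gE A j⁆ = 0 := by
  have := qmk_rel A (Relations.adE ℚ A (i, j)) (by simp [Relations.toSet])
  have key : ∀ n x, qmk A (((LieAlgebra.ad ℚ _ (FreeLieAlgebra.of ℚ (Generators.E i))) ^ n) x) =
      ((LieAlgebra.ad ℚ _ (gE A i)) ^ n) (qmk A x) := by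
    intro n
    induction n with
    | zero => intro x; simp
    | succ n ih =>
      intro x
      rw [pow_succ, pow_succ, Module.End.mul_apply, Module.End.mul_apply, ih]
      simp; rfl
  simp only [Relations.adE, Function.uncurry_apply_pair, Function.comp_apply] at this
  rw [key] at this
  simpa [qmk_of, gE] using this

theorem free_gen {X : Type*} (S : LieSubalgebra ℚ (FreeLieAlgebra ℚ X))
    (h : ∀ x, FreeLieAlgebra.of ℚ x ∈ S) (y : FreeLieAlgebra ℚ X) : y ∈ S := by
  have : S.incl.comp (FreeLieAlgebra.lift ℚ (fun x => (⟨FreeLieAlgebra.of ℚ x, h x⟩ : S))) =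
      LieHom.id := by
    ext x; simp
  have h2 := LieHom.congr_fun this y
  simp only [LieHom.comp_apply, LieHom.id_apply, LieSubalgebra.coe_incl] at h2
  rw [← h2]
  exact Subtype.property _

theorem gen_top (S : LieSubalgebra ℚ (Matrix.ToLieAlgebra ℚ A))
    (h : ∀ x, KMgen A x ∈ S) (y : Matrix.ToLieAlgebra ℚ A) : y ∈ S := by
  obtain ⟨x, rfl⟩ := qmk_surj A y
  exact free_gen (S.comap (qmk A)) (fun x => h x) x

theorem gen_closed (Y : Submodule ℚ (Matrix.ToLieAlgebra ℚ A))
    (h : ∀ x, KMgen A x ∈ Y) (h2 : ∀ x, ∀ y ∈ Y, ⁅KMgen A x, y⁆ ∈ Y)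
    (z : Matrix.ToLieAlgebra ℚ A) : z ∈ Y := by
  have h3 : ∀ x : Matrix.ToLieAlgebra ℚ A, ∀ y ∈ Y, ⁅x, y⁆ ∈ Y := by
    intro x
    refine gen_top A
      { carrier := {x | ∀ y ∈ Y, ⁅x, y⁆ ∈ Y}
        add_mem' := fun {a b} ha hb y hy => by rw [add_lie]; exact Y.add_mem (ha y hy) (hb y hy)
        zero_mem' := fun y hy => by rw [zero_lie]; exact Y.zero_mem
        smul_mem' := fun r a ha y hy => by rw [smul_lie]; exact Y.smul_mem _ (ha y hy)
        lie_mem' := fun {a b} ha hb y hy => by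
          rw [lie_lie]; exact Y.sub_mem (ha _ (hb y hy)) (hb _ (ha y hy)) } h2 x
  exact gen_top A { Y with lie_mem' := fun {a b} ha hb => h3 a b hb } h z
end rel

theorem span_lie {L : Type*} [LieRing L] [LieAlgebra ℚ L] (S : Set L) (N : Submodule ℚ L) (x : L)
    (h : ∀ y ∈ S, ⁅x, y⁆ ∈ N) (y : L) (hy : y ∈ Submodule.span ℚ S) : ⁅x, y⁆ ∈ N := by
  have : Submodule.span ℚ S ≤ N.comap (LieAlgebra.ad ℚ L x : L →ₗ[ℚ] L) :=
    Submodule.span_le.2 fun y hy => h y hy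
  exact this hy

section words
variable {B L : Type*} [DecidableEq B] [LieRing L] [LieAlgebra ℚ L] (A : Matrix B B ℤ)

/-- right normed words -/
def eW (e : B → L) : List B → L
  | [] => 0
  | (i :: l) => if l = [] then e i else ⁅e i, eW e l⁆

variable (e f h : B → L)
  (hef : ∀ i j, ⁅e i, f j⁆ = if i = j then h i else 0)
  (hhe : ∀ i j, ⁅h i, e j⁆ = (A i j : ℚ) • e j)

include hhe in
omit [DecidableEq B] in
theorem wt_eW (i : B) (l : List B) : ⁅h i, eW e l⁆ = (((l.map (A i)).sum : ℤ) : ℚ) • eW e l := by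
  induction l with
  | nil => simp [eW]
  | cons j l ih =>
    by_cases hl : l = []
    · subst hl; simp [eW, hhe]
    · simp only [eW, hl, if_false]
      rw [leibniz_lie, hhe, ih, smul_lie, lie_smul, ← add_smul]
      simp

omit [DecidableEq B] in
theorem e_span (j : B) (x : L) (hx : x ∈ Submodule.span ℚ (Set.range (eW e))) :
    ⁅e j, x⁆ ∈ Submodule.span ℚ (Set.range (eW e)) := by
  refine span_lie _ _ _ ?_ x hx
  rintro _ ⟨m, rfl⟩
  by_cases hm : m = []
  · subst hm; simp [eW]
  · exact Submodule.subset_span ⟨j :: m, by simp [eW, hm]⟩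

include hef hhe in
theorem f_eW (k : B) (l : List B) : ⁅f k, eW e l⁆ ∈
    Submodule.span ℚ (Set.range (eW e)) ⊔ Submodule.span ℚ (Set.range h) := by
  induction l with
  | nil => simp [eW]
  | cons j l ih =>
    have hfe : ⁅f k, e j⁆ = - (if j = k then h j else 0) := by rw [← lie_skew, hef]
    by_cases hl : l = []
    · subst hl
      simp only [eW, if_true, hfe]
      refine Submodule.mem_sup_right (Submodule.neg_mem _ ?_)
      split_ifs
      · exact Submodule.subset_span ⟨j, rfl⟩
      · exact zero_mem _
    · simp only [eW, hl, if_false]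
      rw [leibniz_lie, hfe]
      refine Submodule.add_mem _ ?_ ?_
      · refine Submodule.mem_sup_left ?_
        rw [neg_lie]
        refine Submodule.neg_mem _ ?_
        split_ifs
        · rw [wt_eW A e h hhe]
          exact Submodule.smul_mem _ _ (Submodule.subset_span ⟨l, rfl⟩)
        · rw [zero_lie]; exact zero_mem _
      · refine Submodule.mem_sup_left ?_
        obtain ⟨x, hx, y, hy, hxy⟩ := Submodule.mem_sup.1 ih
        rw [← hxy, lie_add]
        refine Submodule.add_mem _ (e_span e j x hx) (span_lie _ _ _ ?_ y hy)
        rintro _ ⟨m, rfl⟩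
        rw [← lie_skew, hhe]
        refine Submodule.neg_mem _ (Submodule.smul_mem _ _ (Submodule.subset_span ⟨[j], ?_⟩))
        simp [eW]

include hef hhe in
theorem triang (hhh : ∀ i j, ⁅h i, h j⁆ = 0) (hhf : ∀ i j, ⁅h i, f j⁆ = -((A i j : ℚ) • f j)) :
    let Y := (Submodule.span ℚ (Set.range (eW e)) ⊔ Submodule.span ℚ (Set.range h)) ⊔
      Submodule.span ℚ (Set.range (eW f))
    ∀ i, (∀ y ∈ Y, ⁅e i, y⁆ ∈ Y) ∧ (∀ y ∈ Y, ⁅f i, y⁆ ∈ Y) ∧ (∀ y ∈ Y, ⁅h i, y⁆ ∈ Y) := by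
  intro Y i
  have hEW : ∀ l, eW e l ∈ Y := fun l =>
    Submodule.mem_sup_left (Submodule.mem_sup_left (Submodule.subset_span ⟨l, rfl⟩))
  have hFW : ∀ l, eW f l ∈ Y := fun l => Submodule.mem_sup_right (Submodule.subset_span ⟨l, rfl⟩)
  have hH : ∀ l, h l ∈ Y := fun l =>
    Submodule.mem_sup_left (Submodule.mem_sup_right (Submodule.subset_span ⟨l, rfl⟩))
  have key : ∀ x : L, (∀ l, ⁅x, eW e l⁆ ∈ Y) → (∀ l, ⁅x, h l⁆ ∈ Y) → (∀ l, ⁅x, eW f l⁆ ∈ Y) →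
      ∀ y ∈ Y, ⁅x, y⁆ ∈ Y := by
    intro x h1 h2 h3 y hy
    obtain ⟨y1, hy1, y2, hy2, rfl⟩ := Submodule.mem_sup.1 hy
    obtain ⟨y3, hy3, y4, hy4, rfl⟩ := Submodule.mem_sup.1 hy1
    rw [lie_add, lie_add]
    refine Y.add_mem (Y.add_mem ?_ ?_) ?_
    · exact span_lie _ _ _ (by rintro _ ⟨l, rfl⟩; exact h1 l) _ hy3
    · exact span_lie _ _ _ (by rintro _ ⟨l, rfl⟩; exact h2 l) _ hy4
    · exact span_lie _ _ _ (by rintro _ ⟨l, rfl⟩; exact h3 l) _ hy2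
  have hfe' : ∀ i j, ⁅f i, e j⁆ = if i = j then (-h i) else 0 := by
    intro i j
    rw [← lie_skew, hef]
    by_cases hij : i = j
    · subst hij; simp
    · simp [hij, Ne.symm hij]
  have hhf' : ∀ i j, ⁅-h i, f j⁆ = (A i j : ℚ) • f j := by
    intro i j; rw [neg_lie, hhf, neg_neg]
  have he1 : ∀ i, e i ∈ Y := fun i => by simpa [eW] using hEW [i]
  have hf1 : ∀ i, f i ∈ Y := fun i => by simpa [eW] using hFW [i]
  refine ⟨key _ ?_ ?_ ?_, key _ ?_ ?_ ?_, key _ ?_ ?_ ?_⟩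
  · exact fun l => Submodule.mem_sup_left (Submodule.mem_sup_left
      (e_span e i _ (Submodule.subset_span ⟨l, rfl⟩)))
  · intro l
    rw [← lie_skew, hhe]
    exact Y.neg_mem (Y.smul_mem _ (he1 i))
  · intro l
    have := f_eW A f e (fun i => - h i) hfe' hhf' i l
    refine (sup_le ?_ ?_ : _ ≤ Y) this
    · exact le_sup_right
    · rw [Submodule.span_le]; rintro _ ⟨j, rfl⟩; exact Y.neg_mem (hH j)
  · exact fun l => Submodule.mem_sup_left (f_eW A e f h hef hhe i l)
  · intro l
    rw [← lie_skew, hhf, neg_neg]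
    exact Y.smul_mem _ (hf1 i)
  · exact fun l => Submodule.mem_sup_right (e_span f i _ (Submodule.subset_span ⟨l, rfl⟩))
  · intro l
    rw [wt_eW A e h hhe]; exact Y.smul_mem _ (hEW l)
  · intro l; rw [hhh]; exact Y.zero_mem
  · intro l
    have := wt_eW A f (fun i => - h i) hhf' i l
    rw [neg_lie] at this
    rw [← neg_neg ⁅h i, eW f l⁆, this]
    exact Y.neg_mem (Y.smul_mem _ (hFW l))
end words

theorem km_top {B : Type*} [DecidableEq B] (A : Matrix B B ℤ) (z : Matrix.ToLieAlgebra ℚ A) :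
    z ∈ (Submodule.span ℚ (Set.range (eW (gE A))) ⊔ Submodule.span ℚ (Set.range (gH A))) ⊔
      Submodule.span ℚ (Set.range (eW (gF A))) := by
  have t := triang A (gE A) (gF A) (gH A) (rel_ef A) (rel_he A) (rel_hh A) (rel_hf A)
  refine gen_closed A _ ?_ ?_ z
  · rintro (i | i | i)
    · exact Submodule.mem_sup_left (Submodule.mem_sup_right (Submodule.subset_span ⟨i, rfl⟩))
    · refine Submodule.mem_sup_left (Submodule.mem_sup_left (Submodule.subset_span ⟨[i], ?_⟩))
      simp [eW, gE]
    · refine (Submodule.mem_sup_right (Submodule.subset_span ⟨[i], ?_⟩))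
      simp [eW, gF]
  · rintro (i | i | i) y hy
    · exact (t i).2.2 y hy
    · exact (t i).1 y hy
    · exact (t i).2.1 y hy

/-! ### The root space is spanned by words of the right content -/

def cntl {B : Type*} [DecidableEq B] (l : List B) : B → ℤ := fun i => (l.count i : ℤ)

theorem sum_cntl {B : Type*} [DecidableEq B] [Fintype B] (g : B → ℤ) (l : List B) :
    (l.map g).sum = ∑ j, g j * cntl l j := by
  induction l with
  | nil => simp [cntl]
  | cons i l ih =>
    rw [List.map_cons, List.sum_cons, ih]
    simp only [cntl, List.count_cons, Nat.cast_add, mul_add, Finset.sum_add_distrib]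
    simp [add_comm]

theorem rootSpace_span {B : Type*} [DecidableEq B] [Fintype B] (A : Matrix B B ℤ) (n : B → ℤ)
    (hinj : ∀ m : B → ℤ, (∀ i, ∑ j, A i j * m j = ∑ j, A i j * n j) → m = n)
    (h0 : ∃ i, 0 < n i) :
    rootSpace A n ≤ Submodule.span ℚ {x | ∃ l, cntl l = n ∧ x = eW (gE A) l} := by
  set g := Matrix.ToLieAlgebra ℚ A
  let V : (B → ℚ) → Submodule ℚ g := fun χ => ⨅ i,
    Module.End.eigenspace (LieAlgebra.ad ℚ g (gH A i)) (χ i)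
  let χm : (B → ℤ) → B → ℚ := fun m i => ((∑ j, A i j * m j : ℤ) : ℚ)
  have hcomm : ∀ i j, Commute (LieAlgebra.ad ℚ g (gH A i)) (LieAlgebra.ad ℚ g (gH A j)) := by
    intro i j
    refine LinearMap.ext fun x => ?_
    simp only [Module.End.mul_apply, LieAlgebra.ad_apply]
    rw [leibniz_lie, rel_hh, zero_lie, zero_add]
  have hind : iSupIndep V := by
    refine (Module.End.independent_iInf_maxGenEigenspace_of_forall_mapsTo
      (fun i => LieAlgebra.ad ℚ g (gH A i)) ?_).mono ?_
    · intro i j φ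
      exact Module.End.mapsTo_maxGenEigenspace_of_comm (hcomm j i) φ
    · intro χ
      refine iInf_mono fun i => ?_
      exact (Module.End.genEigenspace (LieAlgebra.ad ℚ g (gH A i)) (χ i)).monotone le_top
  have hmemV : ∀ (χ : B → ℚ) (x : g), (∀ i, ⁅gH A i, x⁆ = χ i • x) → x ∈ V χ := by
    intro χ x hx
    simp only [V, Submodule.mem_iInf, Module.End.mem_eigenspace_iff, LieAlgebra.ad_apply]
    exact hx
  have hχ : ∀ m, m ≠ n → χm m ≠ χm n := by
    intro m hm h
    apply hm
    apply hinj
    intro i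
    have := congrFun h i
    simp only [χm] at this
    exact_mod_cast this
  set P := Submodule.span ℚ {x | ∃ l, cntl l = n ∧ x = eW (gE A) l}
  set Q := ⨆ χ, ⨆ (_ : χ ≠ χm n), V χ
  have hQ : ∀ (m : B → ℤ) (x : g), m ≠ n → (∀ i, ⁅gH A i, x⁆ = χm m i • x) → x ∈ Q := by
    intro m x hm hx
    exact (le_iSup₂_of_le (χm m) (hχ m hm) le_rfl : V (χm m) ≤ Q) (hmemV _ _ hx)
  have hwE : ∀ l i, ⁅gH A i, eW (gE A) l⁆ = χm (cntl l) i • eW (gE A) l := by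
    intro l i
    rw [wt_eW A (gE A) (gH A) (rel_he A), sum_cntl]
  have hwF : ∀ l i, ⁅gH A i, eW (gF A) l⁆ = χm (-cntl l) i • eW (gF A) l := by
    intro l i
    have := wt_eW A (gF A) (fun i => -gH A i)
      (fun i j => by rw [neg_lie, rel_hf, neg_neg]) i l
    rw [sum_cntl, neg_lie] at this
    rw [← neg_neg ⁅gH A i, _⁆, this]
    simp [χm]
  have hP : P ≤ V (χm n) := by
    refine Submodule.span_le.2 ?_
    rintro _ ⟨l, hl, rfl⟩
    refine hmemV _ _ fun i => ?_
    rw [hwE, hl]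
  have htop : ∀ x : g, x ∈ P ⊔ Q := by
    intro x
    refine (?_ : _ ≤ P ⊔ Q) (km_top A x)
    refine sup_le (sup_le ?_ ?_) ?_
    · rw [Submodule.span_le]
      rintro _ ⟨l, rfl⟩
      by_cases hl : cntl l = n
      · exact Submodule.mem_sup_left (Submodule.subset_span ⟨l, hl, rfl⟩)
      · exact Submodule.mem_sup_right (hQ _ _ hl (hwE l))
    · rw [Submodule.span_le]
      rintro _ ⟨l, rfl⟩
      refine Submodule.mem_sup_right (hQ 0 _ ?_ ?_)
      · rintro rfl; simp at h0
      · intro i; rw [rel_hh]; simp [χm]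
    · rw [Submodule.span_le]
      rintro _ ⟨l, rfl⟩
      refine Submodule.mem_sup_right (hQ (-cntl l) _ ?_ (hwF l))
      rintro rfl
      obtain ⟨i, hi⟩ := h0
      simp [cntl] at hi
      omega
  intro x hx
  obtain ⟨p, hp, q, hq, hpq⟩ := Submodule.mem_sup.1 (htop x)
  have hxV : x ∈ V (χm n) := hx
  have hqV : q ∈ V (χm n) := by
    have : q = x - p := by rw [← hpq]; abel
    rw [this]; exact Submodule.sub_mem _ hxV (hP hp)
  have : q = 0 := (Submodule.disjoint_def.1 (hind (χm n))) q hqV hq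
  rw [← hpq, this, add_zero]
  exact hp

/-! ### The level decomposition for `E11` -/

abbrev gg := Matrix.ToLieAlgebra ℚ E11M

abbrev eE (i : Fin 11) : gg := gE E11M i

def idx (j : ℕ) : Fin 11 := if j = 0 then 10 else if j = 9 then 8 else Fin.ofNat 11 (8 - j)

def mv (i : Fin 11) : ℕ := if i = 10 then 0 else if i = 8 then 9 else 8 - i.val

theorem idx_mv : ∀ i : Fin 11, i ≠ 9 → idx (mv i) = i ∧ mv i < 10 := by decide

theorem idx_adj : ∀ i < 10, ∀ j < 10, i ≠ j →
    E11M (idx i) (idx j) = if adj i j then -1 else 0 := by decide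

theorem idx_nine : ∀ i < 10, E11M (idx i) 9 = if i = 9 then -1 else 0 := by decide

theorem serre_zero {i j : Fin 11} (h : E11M i j = 0) : ⁅eE i, eE j⁆ = 0 := by
  have := rel_serre E11M i j
  rw [h] at this
  simpa using this

theorem serre_one {i j : Fin 11} (h : E11M i j = -1) : ⁅eE i, ⁅eE i, eE j⁆⁆ = 0 := by
  have := rel_serre E11M i j
  rw [h] at this
  simpa using this

/-- the level one vectors -/
def sE (w : ℕ) : gg := sv (fun j => LieAlgebra.ad ℚ gg (eE (idx j))) (eE 9) w

theorem sE_zero : sE 0 = eE 9 := rfl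

theorem serre_triple {L : Type*} [LieRing L] [LieAlgebra ℚ L] (a b x : L) (h : ⁅a, ⁅a, b⁆⁆ = 0) :
    ⁅a, ⁅a, ⁅b, x⁆⁆⁆ - (2 : ℚ) • ⁅a, ⁅b, ⁅a, x⁆⁆⁆ + ⁅b, ⁅a, ⁅a, x⁆⁆⁆ = 0 := by
  have : ⁅⁅a, ⁅a, b⁆⁆, x⁆ = 0 := by rw [h, zero_lie]
  simp only [lie_lie, lie_sub] at this
  rw [two_smul, ← this]
  abel

theorem sE_act (j : ℕ) (hj : j < 10) (w : ℕ) (hw : w ∈ evs) :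
    ⁅eE (idx j), sE w⁆ = if al j w then sE (w ^^^ mk j) else 0 := by
  have hadj : ∀ i, adj i i = false := by intro i; simp [adj]; omega
  refine minuscule (fun j => LieAlgebra.ad ℚ gg (eE (idx j))) (eE 9) ?_ ?_ ?_ ?_ w hw j hj
  · intro i hi j hj hij ha x
    have h1 := idx_adj i hi j hj hij
    rw [ha] at h1
    simp only [LieAlgebra.ad_apply]
    rw [leibniz_lie, serre_zero (by simpa using h1), zero_lie, zero_add]
  · intro i hi j hj ha x
    have hij : i ≠ j := by rintro rfl; rw [hadj] at ha; simp at ha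
    have h1 := idx_adj i hi j hj hij
    rw [ha] at h1
    exact serre_triple _ _ _ (serre_one (by simpa using h1))
  · intro i hi
    have h1 := idx_nine i (by omega)
    exact serre_zero (by rw [h1, if_neg (by omega)])
  · exact serre_one (idx_nine 9 (by omega))

theorem evs_zero : 0 ∈ evs := (evs_iff 0).2 ⟨by norm_num, by decide⟩

theorem sE_03 : ⁅sE 0, sE 3⁆ = 0 := by
  have h := sE_act 9 (by norm_num) 0 evs_zero
  rw [if_pos (by decide), show 0 ^^^ mk 9 = 3 by decide] at h
  rw [← h, sE_zero, ← lie_skew (eE (idx 9)), lie_neg, neg_eq_zero]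
  exact serre_one (by decide)

def bit (w k : ℕ) : ℤ := if w.testBit k then 1 else 0

def dep (j k : ℕ) : ℤ :=
  (if hi j = k then 1 else 0) + (if lo j = k then (if j = 9 then 1 else -1) else 0)

theorem bit_mk (j w k : ℕ) (h : al j w = true) : bit (w ^^^ mk j) k = bit w k + dep j k := by
  rw [flip_mk]
  unfold bit dep
  rw [testBit_flip, testBit_flip]
  simp only [al, Bool.and_eq_true, beq_iff_eq, Bool.not_eq_true'] at h
  have hne := lo_ne_hi j
  by_cases h1 : lo j = k
  · subst h1
    by_cases h9 : j = 9
    · subst h9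
      have h1 : w.testBit (lo 9) = false := by simpa using h.1
      simp [h1, hne.symm]
    · simp [h.1, hne.symm, h9]
  · by_cases h2 : hi j = k
    · subst h2; simp [h.2, h1]
    · simp [h1, h2]

def dlet (i : Fin 11) (k : ℕ) : ℤ := if i = 9 then 0 else dep (mv i) k

def eps (l : List (Fin 11)) (k : ℕ) : ℤ := (l.map (fun i => dlet i k)).sum

def S1 (ε : ℕ → ℤ) : Submodule ℚ gg :=
  Submodule.span ℚ {x | ∃ w ∈ evs, (∀ k < 10, bit w k = ε k) ∧ x = sE w}

def S2 (ε : ℕ → ℤ) : Submodule ℚ gg :=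
  Submodule.span ℚ {x | ∃ w ∈ evs, ∃ u ∈ evs, (∀ k < 10, bit w k + bit u k = ε k) ∧
    x = ⁅sE w, sE u⁆}

theorem S1_act (i : Fin 11) (hi : i ≠ 9) (ε : ℕ → ℤ) (x : gg) (hx : x ∈ S1 ε) :
    ⁅eE i, x⁆ ∈ S1 (fun k => dlet i k + ε k) := by
  obtain ⟨h1, h2⟩ := idx_mv i hi
  refine span_lie _ _ _ ?_ x hx
  rintro _ ⟨w, hw, hb, rfl⟩
  rw [← h1, sE_act _ h2 w hw]
  split_ifs with ha
  · refine Submodule.subset_span ⟨_, evs_mk w _ h2 hw, fun k hk => ?_, rfl⟩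
    rw [bit_mk _ _ _ ha, hb k hk, h1]
    simp only [dlet, if_neg hi]
    ring
  · exact zero_mem _

theorem S2_mem (ε ε' : ℕ → ℤ) (x y : gg) (hx : x ∈ S1 ε) (hy : y ∈ S1 ε') :
    ⁅x, y⁆ ∈ S2 (fun k => ε k + ε' k) := by
  have : ∀ w ∈ evs, (∀ k < 10, bit w k = ε k) → ∀ y ∈ S1 ε',
      ⁅sE w, y⁆ ∈ S2 (fun k => ε k + ε' k) := by
    intro w hw hb y hy
    refine span_lie _ _ _ ?_ y hy
    rintro _ ⟨u, hu, hb', rfl⟩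
    exact Submodule.subset_span ⟨w, hw, u, hu, fun k hk => by rw [hb k hk, hb' k hk], rfl⟩
  rw [← lie_skew]
  refine Submodule.neg_mem _ (span_lie _ _ _ ?_ x hx)
  rintro _ ⟨w, hw, hb, rfl⟩
  rw [← lie_skew]
  exact Submodule.neg_mem _ (this w hw hb y hy)

theorem S2_congr {ε ε' : ℕ → ℤ} (h : ∀ k < 10, ε k = ε' k) : S2 ε ≤ S2 ε' := by
  refine Submodule.span_mono ?_
  rintro _ ⟨w, hw, u, hu, hb, rfl⟩
  exact ⟨w, hw, u, hu, fun k hk => by rw [hb k hk, h k hk], rfl⟩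

theorem S2_act (i : Fin 11) (hi : i ≠ 9) (ε : ℕ → ℤ) (x : gg) (hx : x ∈ S2 ε) :
    ⁅eE i, x⁆ ∈ S2 (fun k => dlet i k + ε k) := by
  refine span_lie _ _ _ ?_ x hx
  rintro _ ⟨w, hw, u, hu, hb, rfl⟩
  have hw1 : sE w ∈ S1 (bit w) := Submodule.subset_span ⟨w, hw, fun _ _ => rfl, rfl⟩
  have hu1 : sE u ∈ S1 (bit u) := Submodule.subset_span ⟨u, hu, fun _ _ => rfl, rfl⟩
  rw [leibniz_lie]
  refine Submodule.add_mem _ ?_ ?_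
  · refine S2_congr ?_ (S2_mem _ _ _ _ (S1_act i hi _ _ hw1) hu1)
    intro k hk
    have := hb k hk
    linarith
  · refine S2_congr ?_ (S2_mem _ _ _ _ hw1 (S1_act i hi _ _ hu1))
    intro k hk
    have := hb k hk
    linarith

theorem eps_cons (i : Fin 11) (l : List (Fin 11)) :
    eps (i :: l) = fun k => dlet i k + eps l k := by
  funext k; simp [eps]

theorem level0 (l : List (Fin 11)) (hl : l.count 9 = 0) (ε : ℕ → ℤ) (x : gg) (hx : x ∈ S1 ε) :
    ⁅eW eE l, x⁆ ∈ S1 (fun k => eps l k + ε k) := by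
  induction l generalizing ε x with
  | nil => simp [eW]
  | cons i l ih =>
    rw [List.count_cons] at hl
    have hi : i ≠ 9 := by rintro rfl; simp at hl
    have hl' : l.count 9 = 0 := by omega
    rw [eps_cons]
    by_cases hn : l = []
    · subst hn
      simp only [eW, if_true]
      simpa [eps] using S1_act i hi ε x hx
    · simp only [eW, hn, if_false]
      rw [lie_lie]
      refine Submodule.sub_mem _ ?_ ?_
      · have := S1_act i hi _ _ (ih hl' ε x hx)
        simpa only [add_assoc] using this
      · have := ih hl' _ _ (S1_act i hi ε x hx)
        convert this using 2
        funext k; ring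

theorem s0_mem : eE 9 ∈ S1 0 := by
  rw [← sE_zero]
  exact Submodule.subset_span ⟨0, evs_zero, fun k _ => by simp [bit], rfl⟩

theorem level1 (l : List (Fin 11)) (hl : l.count 9 = 1) : eW eE l ∈ S1 (eps l) := by
  induction l with
  | nil => simp [eW]
  | cons i l ih =>
    rw [List.count_cons] at hl
    rw [eps_cons]
    by_cases hi : i = 9
    · subst hi
      have hl' : l.count 9 = 0 := by simpa using hl
      have hd : (fun k => dlet 9 k + eps l k) = eps l := by funext k; simp [dlet]
      rw [hd]
      by_cases hn : l = []
      · subst hn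
        simp only [eW, if_true]
        exact s0_mem
      · simp only [eW, hn, if_false]
        rw [← lie_skew]
        refine Submodule.neg_mem _ ?_
        simpa using level0 l hl' 0 _ s0_mem
    · have hl' : l.count 9 = 1 := by simpa [hi] using hl
      have hn : l ≠ [] := by rintro rfl; simp at hl'
      simp only [eW, hn, if_false]
      exact S1_act i hi _ _ (ih hl')

theorem level2 (l : List (Fin 11)) (hl : l.count 9 = 2) : eW eE l ∈ S2 (eps l) := by
  induction l with
  | nil => simp [eW]
  | cons i l ih =>
    rw [List.count_cons] at hl
    rw [eps_cons]
    by_cases hi : i = 9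
    · subst hi
      have hl' : l.count 9 = 1 := by simpa using hl
      have hn : l ≠ [] := by rintro rfl; simp at hl'
      simp only [eW, hn, if_false]
      have := S2_mem 0 _ _ _ s0_mem (level1 l hl')
      simpa [dlet] using this
    · have hl' : l.count 9 = 2 := by simpa [hi] using hl
      have hn : l ≠ [] := by rintro rfl; simp at hl'
      simp only [eW, hn, if_false]
      exact S2_act i hi _ _ (ih hl')

def bet : Fin 11 → ℤ := ![1,2,3,4,5,6,7,8,5,2,4]

theorem eps_bet (l : List (Fin 11)) (hl : cntl l = bet) (k : ℕ) (hk : k < 10) : eps l k = 1 := by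
  unfold eps
  rw [sum_cntl, hl]
  revert k
  decide

theorem bet_inj (m : Fin 11 → ℤ) (h : ∀ i, ∑ j, E11M i j * m j = ∑ j, E11M i j * bet j) :
    m = bet := by
  have e : ∀ i, ∑ j, E11M i j * (m j - bet j) = 0 := by
    intro i; simp only [mul_sub, Finset.sum_sub_distrib, h i, sub_self]
  have k : ∀ j, m j - bet j = 0 := by
    have E : ∀ x : Fin 11 → ℤ, (∀ i, ∑ j, E11M i j * x j = 0) → ∀ j, x j = 0 := by
      intro x e
      have e0 := e 0
      have e1 := e 1
      have e2 := e 2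
      have e3 := e 3
      have e4 := e 4
      have e5 := e 5
      have e6 := e 6
      have e7 := e 7
      have e8 := e 8
      have e9 := e 9
      have e10 := e 10
      clear e h
      simp [Fin.sum_univ_succ, E11M] at e0 e1 e2 e3 e4 e5 e6 e7 e8 e9 e10
      have z0 : x 0 = 0 := by linarith
      have z1 : x 1 = 0 := by linarith
      have z2 : x 2 = 0 := by linarith
      have z3 : x 3 = 0 := by linarith
      have z4 : x 4 = 0 := by linarith
      have z5 : x 5 = 0 := by linarith
      have z6 : x 6 = 0 := by linarith
      have z7 : x 7 = 0 := by linarith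
      have z10 : x 10 = 0 := by linarith
      have z8 : x 8 = 0 := by linarith
      have z9 : x 9 = 0 := by linarith
      intro j
      fin_cases j <;> assumption
    exact E _ e
  funext j
  have := k j
  linarith

theorem xor_of_bits (w u : ℕ) (hw : w < 1024) (hu : u < 1024)
    (h : ∀ k < 10, bit w k + bit u k = 1) : u = 1023 ^^^ w := by
  refine Nat.eq_of_testBit_eq fun k => ?_
  rw [Nat.testBit_xor, testBit_1023]
  by_cases hk : k < 10
  · have := h k hk
    unfold bit at this
    revert this
    cases w.testBit k <;> cases u.testBit k <;> simp [hk]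
  · have e : 1024 ≤ 2 ^ k := by
      calc 1024 = 2 ^ 10 := by norm_num
        _ ≤ 2 ^ k := Nat.pow_le_pow_right (by norm_num) (by omega)
    rw [Nat.testBit_lt_two_pow (by omega), Nat.testBit_lt_two_pow (by omega)]
    simp [hk]

theorem rootSpace_le : rootSpace E11M bet ≤
    Submodule.span ℚ (Gv sE '' (J46 : Set (Finset ℕ))) := by
  refine (rootSpace_span E11M bet bet_inj ⟨0, by decide⟩).trans ?_
  rw [Submodule.span_le]
  rintro _ ⟨l, hl, rfl⟩
  have h9 : l.count 9 = 2 := by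
    have := congrFun hl 9
    have h2 : bet 9 = 2 := by decide
    rw [h2] at this
    simp only [cntl] at this
    exact_mod_cast this
  have h2 := level2 l h9
  refine (?_ : S2 (eps l) ≤ _) h2
  refine Submodule.span_le.2 ?_
  rintro _ ⟨w, hw, u, hu, hb, rfl⟩
  have : u = 1023 ^^^ w := xor_of_bits w u ((evs_iff w).1 hw).1 ((evs_iff u).1 hu).1
    (fun k hk => by rw [hb k hk, eps_bet l hl k hk])
  subst this
  exact brk_mem sE (fun j => eE (idx j)) sE_act sE_03 w hw

/-! ### The vectors lie in the root space -/

def wdAux : ℕ → ℕ → List (Fin 11)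
  | 0, _ => [9]
  | (n + 1), w => bif w == 0 then [9] else idx (canon w) :: wdAux n (prv w)

def wd (w : ℕ) : List (Fin 11) := wdAux w w

theorem wdAux_ne (n w : ℕ) : wdAux n w ≠ [] := by
  cases n
  · simp [wdAux]
  · rw [wdAux]; cases (w == 0) <;> simp

theorem sE_wd (w : ℕ) : sE w = eW eE (wd w) := by
  have : ∀ n w, sAux (fun j => LieAlgebra.ad ℚ gg (eE (idx j))) (eE 9) n w = eW eE (wdAux n w) := by
    intro n
    induction n with
    | zero => intro w; simp [sAux, wdAux, eW]
    | succ n ih =>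
      intro w
      rw [sAux, wdAux]
      by_cases h : w = 0
      · simp [h, eW]
      · have h' : (w == 0) = false := by simpa using h
        rw [if_neg h, h', cond_false, eW, if_neg (wdAux_ne _ _), ih, LieAlgebra.ad_apply]
  exact this w w

theorem wd_bits (n w : ℕ) (hw : w ∈ evs) (hn : w ≤ n) :
    (wdAux n w).count 9 = 1 ∧ ∀ k, eps (wdAux n w) k = bit w k := by
  induction n generalizing w with
  | zero =>
    obtain rfl : w = 0 := by omega
    exact ⟨by decide, fun k => by simp [wdAux, eps, dlet, bit]⟩
  | succ n ih =>
    rw [wdAux]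
    by_cases h : w = 0
    · subst h
      exact ⟨by simp, fun k => by simp [eps, dlet, bit]⟩
    · have h' : (w == 0) = false := by simpa using h
      obtain ⟨h1, h2, h3, h4⟩ := prv_lt w hw h
      obtain ⟨g1, g2⟩ := ih (prv w) h4 (by omega)
      have hidx : ∀ j < 10, idx j ≠ 9 ∧ mv (idx j) = j := by decide
      rw [h', cond_false]
      constructor
      · rw [List.count_cons, g1]; simp [(hidx _ h1).1]
      · intro k
        rw [eps_cons]
        simp only [g2, dlet, if_neg (hidx _ h1).1, (hidx _ h1).2]
        rw [add_comm, ← bit_mk _ _ _ h2]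
        unfold prv
        rw [xor_self3]

theorem bet_of_eps (l : List (Fin 11)) (h9 : l.count 9 = 2) (h : ∀ k < 10, eps l k = 1) :
    cntl l = bet := by
  have e9 : cntl l 9 = 2 := by unfold cntl; rw [h9]; rfl
  have e : ∀ k < 10, ∑ j, dlet j k * cntl l j = 1 := by
    intro k hk; rw [← sum_cntl]; exact h k hk
  generalize cntl l = x at *
  have e0 := e 0 (by norm_num)
  have e1 := e 1 (by norm_num)
  have e2 := e 2 (by norm_num)
  have e3 := e 3 (by norm_num)
  have e4 := e 4 (by norm_num)
  have e5 := e 5 (by norm_num)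
  have e6 := e 6 (by norm_num)
  have e7 := e 7 (by norm_num)
  have e8 := e 8 (by norm_num)
  have e10 := e 9 (by norm_num)
  clear e h
  simp [Fin.sum_univ_succ, dlet, mv, dep, lo, hi] at e0 e1 e2 e3 e4 e5 e6 e7 e8 e10
  funext j
  fin_cases j <;> simp [bet] <;> omega

theorem wd_cnt (w : ℕ) (hw : w ∈ evs) : cntl (wd w ++ wd (1023 ^^^ w)) = bet := by
  obtain ⟨a1, a2⟩ := wd_bits w w hw le_rfl
  obtain ⟨b1, b2⟩ := wd_bits _ _ (evs_compl w hw) le_rfl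
  refine bet_of_eps _ (by rw [List.count_append, wd, wd, a1, b1]) fun k hk => ?_
  have : eps (wd w ++ wd (1023 ^^^ w)) k = eps (wd w) k + eps (wd (1023 ^^^ w)) k := by
    simp [eps]
  rw [this, wd, wd, a2, b2]
  unfold bit
  rw [Nat.testBit_xor, testBit_1023]
  cases w.testBit k <;> simp [hk]

theorem Gv_root (I : Finset ℕ) : Gv sE I ∈ rootSpace E11M bet := by
  unfold Gv
  refine Submodule.sum_mem _ fun w hw => Submodule.smul_mem _ _ ?_
  simp only [rootSpace, Submodule.mem_iInf, Module.End.mem_eigenspace_iff, LieAlgebra.ad_apply]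
  intro i
  rw [leibniz_lie, sE_wd, sE_wd, wt_eW E11M eE (gH E11M) (rel_he E11M),
    wt_eW E11M eE (gH E11M) (rel_he E11M), smul_lie, lie_smul, ← add_smul, ← wd_cnt w hw,
    ← sum_cntl, List.map_append, List.sum_append]
  push_cast
  rfl

attribute [local instance] LieRing.ofAssociativeRing LieAlgebra.ofAssociativeAlgebra

/-! ### A Verma type construction: positive part maps to any Serre algebra -/

section serre
variable {B L : Type*} [DecidableEq B] [LieRing L] [LieAlgebra ℚ L] (A : Matrix B B ℤ)
  (e f h : B → L)

/-- Serre elements for simply laced matrices -/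
def serreEl (i j : B) : L := if A i j = -1 then ⁅e i, ⁅e i, e j⁆⁆ else ⁅e i, e j⁆

theorem serre_comm (hA2 : ∀ i, A i i = 2) (hA : ∀ i j, i ≠ j → A i j = 0 ∨ A i j = -1)
    (hAs : ∀ i j, A i j = A j i)
    (hef : ∀ i j, ⁅e i, f j⁆ = if i = j then h i else 0)
    (hhe : ∀ i j, ⁅h i, e j⁆ = (A i j : ℚ) • e j) (k i j : B) :
    ⁅f k, serreEl A e i j⁆ = 0 := by
  have hfe : ∀ k j, ⁅f k, e j⁆ = - (if j = k then h j else 0) := by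
    intro k j; rw [← lie_skew, hef]
  have heh : ∀ i j, ⁅e i, h j⁆ = - ((A j i : ℚ) • e i) := by
    intro i j; rw [← lie_skew, hhe]
  unfold serreEl
  by_cases hij : i = j
  · subst hij
    rw [hA2, if_neg (by norm_num), lie_self, lie_zero]
  · have hji : ¬ j = i := fun h => hij h.symm
    rcases hA i j hij with h0 | h1
    · have h0' : A j i = 0 := by rw [← hAs, h0]
      rw [h0, if_neg (by norm_num), leibniz_lie, hfe, hfe]
      by_cases hk : i = k
      · subst hk; simp [hji, hhe, h0]
      · by_cases hk' : j = k
        · subst hk'; simp [hij, heh, h0']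
        · simp [hk, hk']
    · have h1' : A j i = -1 := by rw [← hAs, h1]
      rw [h1, if_pos rfl, leibniz_lie, leibniz_lie (f k), hfe, hfe]
      by_cases hk : i = k
      · subst hk
        simp only [if_true, hji, if_false, neg_zero, lie_zero, add_zero, neg_lie, hhe, h1]
        rw [leibniz_lie, hhe, hhe, hA2, h1]
        simp only [smul_lie, lie_smul, lie_neg]
        module
      · by_cases hk' : j = k
        · subst hk'; simp [hij, heh, h1']
        · simp [hk, hk']
end serre

section verma
variable {B : Type*} [DecidableEq B] (A : Matrix B B ℤ)

abbrev TT (B : Type*) := List B →₀ ℚ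

def tl {B : Type*} (l : List B) : TT B := Finsupp.single l 1

theorem tt_ext {B M : Type*} [AddCommMonoid M] [Module ℚ M] {f g : TT B →ₗ[ℚ] M}
    (h : ∀ w, f (tl w) = g (tl w)) : f = g := by
  ext w; exact h w

def eT (j : B) : Module.End ℚ (TT B) := Finsupp.linearCombination ℚ (fun l => tl (j :: l))

def hT (i : B) : Module.End ℚ (TT B) :=
  Finsupp.linearCombination ℚ (fun l => (((l.map (A i)).sum : ℤ) : ℚ) • tl l)

def fTv (k : B) : List B → TT B
  | [] => 0
  | (j :: l) => eT j (fTv k l) - if j = k then hT A k (tl l) else 0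

def fT (k : B) : Module.End ℚ (TT B) := Finsupp.linearCombination ℚ (fTv A k)

omit [DecidableEq B] in
theorem eT_tl (j : B) (l : List B) : eT j (tl l) = tl (j :: l) := by simp [eT, tl]

omit [DecidableEq B] in
theorem hT_tl (i : B) (l : List B) :
    hT A i (tl l) = (((l.map (A i)).sum : ℤ) : ℚ) • tl l := by simp [hT, tl]

theorem fT_nil (k : B) : fT A k (tl []) = 0 := by simp [fT, tl, fTv]

theorem fT_cons (k j : B) (l : List B) :
    fT A k (tl (j :: l)) = eT j (fT A k (tl l)) - if j = k then hT A k (tl l) else 0 := by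
  simp [fT, tl, fTv]

theorem T_ef (i j : B) : ⁅eT i, fT A j⁆ = if i = j then hT A i else 0 := by
  refine tt_ext fun l => ?_
  rw [LieRing.of_associative_ring_bracket, LinearMap.sub_apply, Module.End.mul_apply,
    Module.End.mul_apply, eT_tl, fT_cons]
  by_cases h : i = j
  · subst h; simp
  · simp [h]

omit [DecidableEq B] in
theorem T_hh (i j : B) : ⁅hT A i, hT A j⁆ = 0 := by
  refine tt_ext fun l => ?_
  rw [LieRing.of_associative_ring_bracket, LinearMap.sub_apply, Module.End.mul_apply,
    Module.End.mul_apply, hT_tl, hT_tl, map_smul, map_smul, hT_tl, hT_tl, smul_comm]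
  simp

omit [DecidableEq B] in
theorem T_he (i j : B) : ⁅hT A i, eT j⁆ = (A i j : ℚ) • eT j := by
  refine tt_ext fun l => ?_
  rw [LieRing.of_associative_ring_bracket, LinearMap.sub_apply, Module.End.mul_apply,
    Module.End.mul_apply, hT_tl, eT_tl, map_smul, hT_tl, eT_tl, LinearMap.smul_apply, eT_tl,
    ← sub_smul]
  simp

omit [DecidableEq B] in
/-- an operator commuting with all `e` and killing the vacuum vanishes -/
theorem op_zero (x : Module.End ℚ (TT B)) (h0 : x (tl []) = 0)
    (h : ∀ k : B, ⁅eT k, x⁆ = 0) : x = 0 := by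
  refine tt_ext fun l => ?_
  induction l with
  | nil => simpa using h0
  | cons j l ih =>
    have := LinearMap.congr_fun (h j) (tl l)
    rw [LieRing.of_associative_ring_bracket, LinearMap.sub_apply, Module.End.mul_apply,
      Module.End.mul_apply, eT_tl, ih] at this
    simpa using this

theorem T_hf_gen {L : Type*} [LieRing L] [LieAlgebra ℚ L] (h e f k : L) (a b : ℚ) (p : Prop)
    [Decidable p] (hp : p → a = b) (h1 : ⁅h, e⁆ = a • e) (h2 : ⁅e, f⁆ = if p then k else 0)
    (h3 : ⁅h, k⁆ = 0) : ⁅e, ⁅h, f⁆ - -(b • f)⁆ = 0 := by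
  rw [lie_sub, leibniz_lie, ← lie_skew e h, h1, neg_lie, smul_lie, h2, lie_neg, lie_smul, h2]
  by_cases h : p
  · simp [h, hp h, h3]
  · simp [h]

theorem T_hf (i j : B) : ⁅hT A i, fT A j⁆ = -((A i j : ℚ) • fT A j) := by
  rw [← sub_eq_zero]
  refine op_zero _ ?_ ?_
  · simp [LieRing.of_associative_ring_bracket, fT_nil, hT_tl]
  · intro k
    exact T_hf_gen (hT A i) (eT k) (fT A j) (hT A k) (A i k) (A i j) (k = j)
      (fun h => by rw [h]) (T_he A i k) (T_ef A k j) (T_hh A i k)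

/-- representation of the free Lie algebra -/
def rho : FreeLieAlgebra ℚ (Generators B) →ₗ⁅ℚ⁆ Module.End ℚ (TT B) :=
  FreeLieAlgebra.lift ℚ (fun x => match x with
    | Generators.H i => hT A i
    | Generators.E i => eT i
    | Generators.F i => fT A i)

theorem rho_H (i : B) : rho A (FreeLieAlgebra.of ℚ (Generators.H i)) = hT A i := by simp [rho]
theorem rho_E (i : B) : rho A (FreeLieAlgebra.of ℚ (Generators.E i)) = eT i := by simp [rho]
theorem rho_F (i : B) : rho A (FreeLieAlgebra.of ℚ (Generators.F i)) = fT A i := by simp [rho]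

/-- submodule generated by the Serre operators -/
def KT : Submodule ℚ (TT B) :=
  Submodule.span ℚ {x | ∃ (l : List B) (i j : B) (t : TT B),
    x = (l.map eT).prod (serreEl A eT i j t)}

variable (hA2 : ∀ i, A i i = 2) (hA : ∀ i j, i ≠ j → A i j = 0 ∨ A i j = -1)
    (hAs : ∀ i j, A i j = A j i)

omit [DecidableEq B] in
theorem KT_e (k : B) (x : TT B) (hx : x ∈ KT A) : eT k x ∈ KT A := by
  have : KT A ≤ (KT A).comap (eT k) := by
    refine Submodule.span_le.2 ?_
    rintro _ ⟨l, i, j, t, rfl⟩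
    exact Submodule.subset_span ⟨k :: l, i, j, t, by simp⟩
  exact this hx

omit [DecidableEq B] in
theorem KT_wt (D : Module.End ℚ (TT B)) 
    (hD : ∀ (l : List B) (i j : B) (t : TT B), D ((l.map eT).prod (serreEl A eT i j t)) ∈ KT A)
    (x : TT B) (hx : x ∈ KT A) : D x ∈ KT A := by
  have : KT A ≤ (KT A).comap D := by
    refine Submodule.span_le.2 ?_
    rintro _ ⟨l, i, j, t, rfl⟩
    exact hD l i j t
  exact this hx

omit [DecidableEq B] in
theorem op_comm {D x : Module.End ℚ (TT B)} (t : TT B) : D (x t) = x (D t) + ⁅D, x⁆ t := by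
  rw [LieRing.of_associative_ring_bracket, LinearMap.sub_apply, Module.End.mul_apply,
    Module.End.mul_apply]; abel

omit [DecidableEq B] in
theorem serre_wt_gen {L : Type*} [LieRing L] [LieAlgebra ℚ L] (e : B → L) (h : L) (c : B → ℚ)
    (hc : ∀ i, ⁅h, e i⁆ = c i • e i) (i j : B) :
    ∃ r : ℚ, ⁅h, serreEl A e i j⁆ = r • serreEl A e i j := by
  unfold serreEl
  split_ifs
  · refine ⟨c i + c i + c j, ?_⟩
    rw [leibniz_lie, leibniz_lie h, hc, hc]
    simp only [smul_lie, lie_smul, lie_add]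
    module
  · refine ⟨c i + c j, ?_⟩
    rw [leibniz_lie, hc, hc]
    simp only [smul_lie, lie_smul]
    module

omit [DecidableEq B] in
theorem serre_wt (k i j : B) :
    ∃ r : ℚ, ⁅hT A k, serreEl A (eT (B := B)) i j⁆ = r • serreEl A eT i j :=
  serre_wt_gen A eT (hT A k) (fun i => (A k i : ℚ)) (fun i => T_he A k i) i j

omit [DecidableEq B] in
theorem KT_h (k : B) (x : TT B) (hx : x ∈ KT A) : hT A k x ∈ KT A := by
  refine KT_wt A _ ?_ x hx
  intro l i j t
  induction l with
  | nil =>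
    obtain ⟨r, hr⟩ := serre_wt A k i j
    simp only [List.map_nil, List.prod_nil, Module.End.one_apply]
    rw [op_comm, hr]
    refine Submodule.add_mem _ (Submodule.subset_span ⟨[], i, j, hT A k t, by simp⟩) ?_
    rw [LinearMap.smul_apply]
    exact Submodule.smul_mem _ _ (Submodule.subset_span ⟨[], i, j, t, by simp⟩)
  | cons m l ih =>
    simp only [List.map_cons, List.prod_cons, Module.End.mul_apply]
    rw [op_comm, T_he, LinearMap.smul_apply]
    refine Submodule.add_mem _ (KT_e A m _ ih) (Submodule.smul_mem _ _ (KT_e A m _ ?_))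
    exact Submodule.subset_span ⟨l, i, j, t, rfl⟩

include hA2 hA hAs in
theorem KT_f (k : B) (x : TT B) (hx : x ∈ KT A) : fT A k x ∈ KT A := by
  refine KT_wt A _ ?_ x hx
  intro l i j t
  induction l with
  | nil =>
    simp only [List.map_nil, List.prod_nil, Module.End.one_apply]
    rw [op_comm, serre_comm A eT (fT A) (hT A) hA2 hA hAs (T_ef A) (T_he A)]
    refine Submodule.add_mem _ (Submodule.subset_span ⟨[], i, j, fT A k t, by simp⟩) ?_
    simp
  | cons m l ih =>
    simp only [List.map_cons, List.prod_cons, Module.End.mul_apply]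
    rw [op_comm, ← lie_skew, T_ef]
    refine Submodule.add_mem _ (KT_e A m _ ih) ?_
    rw [LinearMap.neg_apply]
    refine Submodule.neg_mem _ ?_
    split_ifs
    · exact KT_h A m _ (Submodule.subset_span ⟨l, i, j, t, rfl⟩)
    · simp

include hA2 hA hAs in
theorem KT_rho (y : FreeLieAlgebra ℚ (Generators B)) (x : TT B) (hx : x ∈ KT A) :
    rho A y x ∈ KT A := by
  revert x
  refine free_gen
    { carrier := {y | ∀ x ∈ KT A, rho A y x ∈ KT A}
      add_mem' := fun {a b} ha hb y hy => by
        rw [map_add]; exact Submodule.add_mem _ (ha y hy) (hb y hy)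
      zero_mem' := fun y hy => by rw [map_zero]; exact Submodule.zero_mem _
      smul_mem' := fun r a ha y hy => by rw [map_smul]; exact Submodule.smul_mem _ _ (ha y hy)
      lie_mem' := fun {a b} ha hb y hy => by
        rw [LieHom.map_lie, LieRing.of_associative_ring_bracket]
        exact Submodule.sub_mem _ (ha _ (hb y hy)) (hb _ (ha y hy)) } ?_ y
  rintro (i | i | i) x hx
  · rw [rho_H]; exact KT_h A i x hx
  · rw [rho_E]; exact KT_e A i x hx
  · rw [rho_F]; exact KT_f A hA2 hA hAs i x hx

/-- the ideal acting into `KT` -/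
def IK : LieIdeal ℚ (FreeLieAlgebra ℚ (Generators B)) where
  carrier := {y | ∀ x, rho A y x ∈ KT A}
  add_mem' := fun {a b} ha hb y => by
    rw [map_add]; exact Submodule.add_mem _ (ha y) (hb y)
  zero_mem' := fun y => by rw [map_zero]; exact Submodule.zero_mem _
  smul_mem' := fun r a ha y => by rw [map_smul]; exact Submodule.smul_mem _ _ (ha y)
  lie_mem := fun {a b} hb y => by
    rw [LieHom.map_lie, LieRing.of_associative_ring_bracket]
    exact Submodule.sub_mem _ (KT_rho A hA2 hA hAs a _ (hb y)) (hb _)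

omit [DecidableEq B] in
theorem ad_pow_serre {L : Type*} [LieRing L] [LieAlgebra ℚ L] (hA2 : ∀ i, A i i = 2)
    (hA : ∀ i j, i ≠ j → A i j = 0 ∨ A i j = -1) (e : B → L) (i j : B) :
    ((LieAlgebra.ad ℚ L (e i)) ^ (-A i j).toNat) ⁅e i, e j⁆ = serreEl A e i j := by
  unfold serreEl
  by_cases h : i = j
  · subst h; rw [hA2]; simp
  · rcases hA i j h with h | h <;> rw [h] <;> simp

theorem rho_serre (G : B → Generators B) (i j : B) :
    rho A (serreEl A (fun i => FreeLieAlgebra.of ℚ (G i)) i j) =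
      serreEl A (fun i => rho A (FreeLieAlgebra.of ℚ (G i))) i j := by
  unfold serreEl
  split_ifs <;> simp only [LieHom.map_lie]

theorem ideal_le : Relations.toIdeal ℚ A ≤ IK A hA2 hA hAs := by
  refine LieSubmodule.lieSpan_le.2 ?_
  have key : ∀ y, rho A y = 0 → y ∈ IK A hA2 hA hAs := by
    intro y hy x
    rw [hy]; exact Submodule.zero_mem _
  rintro y (((((⟨⟨i, j⟩, rfl⟩ | ⟨⟨i, j⟩, rfl⟩) | ⟨⟨i, j⟩, rfl⟩) | ⟨⟨i, j⟩, rfl⟩) | ⟨⟨i, j⟩, rfl⟩) |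
    ⟨⟨i, j⟩, rfl⟩)
  · apply key
    simp [Relations.HH, LieHom.map_lie, rho_H, T_hh]
  · apply key
    have := T_ef A i j
    by_cases h : i = j
    · subst h; simp [Relations.EF, LieHom.map_lie, rho_H, rho_E, rho_F, this]
    · simp [Relations.EF, LieHom.map_lie, rho_E, rho_F, h, this]
  · apply key
    simp [Relations.HE, LieHom.map_lie, rho_H, rho_E, T_he, -zsmul_eq_mul]
    refine sub_eq_zero.2 (tt_ext fun l => ?_)
    change ((A i j : ℤ) : ℚ) • (eT j (tl l)) = (A i j) • (eT j (tl l))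
    exact Int.cast_smul_eq_zsmul ℚ _ _
  · apply key
    simp [Relations.HF, LieHom.map_lie, rho_H, rho_F, T_hf, -zsmul_eq_mul]
    refine neg_add_eq_zero.2 (tt_ext fun l => ?_)
    change ((A i j : ℤ) : ℚ) • (fT A j (tl l)) = (A i j) • (fT A j (tl l))
    exact Int.cast_smul_eq_zsmul ℚ _ _
  · intro x
    simp only [Relations.adE, Function.uncurry_apply_pair, Function.comp_apply]
    rw [ad_pow_serre A hA2 hA (fun i => FreeLieAlgebra.of ℚ (Generators.E i)), rho_serre]
    simp only [rho_E]
    exact Submodule.subset_span ⟨[], i, j, x, by simp⟩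
  · apply key
    simp only [Relations.adF, Function.uncurry_apply_pair, Function.comp_apply]
    rw [ad_pow_serre A hA2 hA (fun i => FreeLieAlgebra.of ℚ (Generators.F i)), rho_serre]
    simp only [rho_F]
    refine op_zero _ ?_ fun k => ?_
    · unfold serreEl
      split_ifs <;> simp [LieRing.of_associative_ring_bracket, fT_nil]
    · refine serre_comm A (fT A) eT (fun i => - hT A i) hA2 hA hAs ?_ ?_ k i j
      · intro i j
        rw [← lie_skew, T_ef]
        by_cases h : i = j
        · subst h; simp
        · simp [h, Ne.symm h]
      · intro i j; rw [neg_lie, T_hf, neg_neg]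

variable {R : Type*} [Ring R] [Algebra ℚ R] (E : B → R) (hE : ∀ i j, serreEl A E i j = 0)

def piT : TT B →ₗ[ℚ] R := Finsupp.linearCombination ℚ (fun l => (l.map E).prod)

omit [DecidableEq B] in
theorem piT_nil : piT E (tl []) = 1 := by simp [piT, tl]

def Intw (x : Module.End ℚ (TT B)) (a : R) : Prop := ∀ t, piT E (x t) = a * piT E t

omit [DecidableEq B] in
theorem intw_e (i : B) : Intw E (eT i) (E i) := by
  intro t
  have : piT E ∘ₗ eT i = LinearMap.mulLeft ℚ (E i) ∘ₗ piT E := by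
    refine tt_ext fun l => ?_
    simp only [LinearMap.comp_apply, eT_tl, LinearMap.mulLeft_apply]
    simp [piT, tl]
  exact LinearMap.congr_fun this t

omit [DecidableEq B] in
theorem intw_lie {x y : Module.End ℚ (TT B)} {a b : R} (hx : Intw E x a) (hy : Intw E y b) :
    Intw E ⁅x, y⁆ ⁅a, b⁆ := by
  intro t
  rw [LieRing.of_associative_ring_bracket, LieRing.of_associative_ring_bracket,
    LinearMap.sub_apply, Module.End.mul_apply, Module.End.mul_apply, map_sub, hx, hy, hy, hx,
    sub_mul, mul_assoc, mul_assoc]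

omit [DecidableEq B] in
include hE in
theorem piT_KT (x : TT B) (hx : x ∈ KT A) : piT E x = 0 := by
  have : KT A ≤ LinearMap.ker (piT E) := by
    refine Submodule.span_le.2 ?_
    rintro _ ⟨l, i, j, t, rfl⟩
    change piT E _ = 0
    have h1 : Intw E (serreEl A eT i j) (serreEl A E i j) := by
      unfold serreEl
      split_ifs
      · exact intw_lie E (intw_e E i) (intw_lie E (intw_e E i) (intw_e E j))
      · exact intw_lie E (intw_e E i) (intw_e E j)
    induction l with
    | nil => simp [h1 t, hE]
    | cons m l ih =>
      simp only [List.map_cons, List.prod_cons, Module.End.mul_apply]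
      rw [intw_e E m, ih, mul_zero]
  exact this hx

/-- the graph of the map from the positive part to `R` -/
def Gr (x : Matrix.ToLieAlgebra ℚ A) (a : R) : Prop := ∃ y, qmk A y = x ∧ Intw E (rho A y) a

theorem gr_e (i : B) : Gr A E (gE A i) (E i) :=
  ⟨FreeLieAlgebra.of ℚ (Generators.E i), rfl, by rw [rho_E]; exact intw_e E i⟩

theorem gr_lie {x y a b} (hx : Gr A E x a) (hy : Gr A E y b) : Gr A E ⁅x, y⁆ ⁅a, b⁆ := by
  obtain ⟨u, rfl, hu⟩ := hx
  obtain ⟨v, rfl, hv⟩ := hy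
  exact ⟨⁅u, v⁆, LieHom.map_lie _ _ _, by rw [LieHom.map_lie]; exact intw_lie E hu hv⟩

theorem gr_zero : Gr A E 0 0 := ⟨0, map_zero _, by intro t; simp⟩

theorem gr_add {x y a b} (hx : Gr A E x a) (hy : Gr A E y b) : Gr A E (x + y) (a + b) := by
  obtain ⟨u, rfl, hu⟩ := hx
  obtain ⟨v, rfl, hv⟩ := hy
  refine ⟨u + v, map_add _ _ _, fun t => ?_⟩
  rw [map_add, LinearMap.add_apply, map_add, hu, hv, add_mul]

theorem gr_smul {x a} (r : ℚ) (hx : Gr A E x a) : Gr A E (r • x) (r • a) := by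
  obtain ⟨u, rfl, hu⟩ := hx
  refine ⟨r • u, map_smul _ _ _, fun t => ?_⟩
  rw [map_smul, LinearMap.smul_apply, map_smul, hu, smul_mul_assoc]

theorem gr_sum {ι : Type*} (s : Finset ι) (x : ι → Matrix.ToLieAlgebra ℚ A) (a : ι → R)
    (h : ∀ i ∈ s, Gr A E (x i) (a i)) : Gr A E (∑ i ∈ s, x i) (∑ i ∈ s, a i) := by
  classical
  induction s using Finset.induction_on with
  | empty => simpa using gr_zero A E
  | insert i s hi ih =>
    rw [Finset.sum_insert hi, Finset.sum_insert hi]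
    exact gr_add A E (h i (Finset.mem_insert_self _ _))
      (ih fun j hj => h j (Finset.mem_insert_of_mem hj))

include hA2 hA hAs hE in
theorem gr_fun {a} (h : Gr A E 0 a) : a = 0 := by
  obtain ⟨y, hy, ha⟩ := h
  have h1 := ideal_le A hA2 hA hAs ((qmk_zero_iff A y).1 hy)
  have h2 := piT_KT A E hE _ (h1 (tl []))
  rw [ha, piT_nil, mul_one] at h2
  exact h2

theorem gr_eW (l : List B) : Gr A E (eW (gE A) l) (eW E l) := by
  induction l with
  | nil => exact gr_zero A E
  | cons i l ih =>
    rw [eW, eW]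
    split_ifs
    · exact gr_e A E i
    · exact gr_lie A E (gr_e A E i) ih

end verma

/-! ### The quadratic Clifford elements -/

def Vs : Submodule ℚ (Module.End ℚ Fk) := Submodule.span ℚ (Set.range cA ∪ Set.range cC)

theorem cA_Vs (k : ℕ) : cA k ∈ Vs := Submodule.subset_span (Or.inl ⟨k, rfl⟩)
theorem cC_Vs (k : ℕ) : cC k ∈ Vs := Submodule.subset_span (Or.inr ⟨k, rfl⟩)

theorem Vs_ind {p : Module.End ℚ Fk → Prop} (hA : ∀ k, p (cA k)) (hC : ∀ k, p (cC k))
    (h0 : p 0) (hadd : ∀ x y, p x → p y → p (x + y)) (hs : ∀ (r : ℚ) x, p x → p (r • x))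
    (x : Module.End ℚ Fk) (hx : x ∈ Vs) : p x := by
  refine Submodule.span_induction ?_ h0 (fun x y _ _ => hadd x y) (fun r x _ => hs r x) hx
  rintro _ (⟨k, rfl⟩ | ⟨k, rfl⟩)
  · exact hA k
  · exact hC k

theorem anti_gen (x y : Module.End ℚ Fk) (hx : x ∈ Set.range cA ∪ Set.range cC)
    (hy : y ∈ Set.range cA ∪ Set.range cC) : ∃ r : ℚ, x * y + y * x = r • 1 := by
  have F := fock_car
  rcases hx with ⟨i, rfl⟩ | ⟨i, rfl⟩ <;> rcases hy with ⟨j, rfl⟩ | ⟨j, rfl⟩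
  · exact ⟨0, by rw [F.cc i j]; simp⟩
  · by_cases h : i = j
    · subst h; exact ⟨1, by rw [F.cd1]; simp⟩
    · exact ⟨0, by rw [F.cd i j h]; simp⟩
  · by_cases h : j = i
    · subst h; exact ⟨1, by rw [F.cd1]; simp⟩
    · exact ⟨0, by rw [F.cd j i h]; simp⟩
  · exact ⟨0, by rw [F.dd i j]; simp⟩

theorem anti (x y : Module.End ℚ Fk) (hx : x ∈ Vs) (hy : y ∈ Vs) :
    ∃ r : ℚ, x * y + y * x = r • 1 := by
  unfold Vs at hx hy
  induction hx, hy using Submodule.span_induction₂ with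
  | mem_mem x y hx hy => exact anti_gen x y hx hy
  | zero_left y hy => exact ⟨0, by simp⟩
  | zero_right y hy => exact ⟨0, by simp⟩
  | add_left x y z _ _ _ h1 h2 =>
    obtain ⟨r, hr⟩ := h1
    obtain ⟨s, hs⟩ := h2
    exact ⟨r + s, by rw [add_smul, ← hr, ← hs]; noncomm_ring⟩
  | add_right x y z _ _ _ h1 h2 =>
    obtain ⟨r, hr⟩ := h1
    obtain ⟨s, hs⟩ := h2
    exact ⟨r + s, by rw [add_smul, ← hr, ← hs]; noncomm_ring⟩
  | smul_left t x y _ _ h =>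
    obtain ⟨r, hr⟩ := h
    exact ⟨t * r, by rw [mul_smul, ← hr, smul_add, smul_mul_assoc, mul_smul_comm]⟩
  | smul_right t x y _ _ h =>
    obtain ⟨r, hr⟩ := h
    exact ⟨t * r, by rw [mul_smul, ← hr, smul_add, smul_mul_assoc, mul_smul_comm]⟩

def PQ : Submodule ℚ (Module.End ℚ Fk) := Submodule.span ℚ {1} ⊔ Vs * Vs

theorem PQ_one : (1 : Module.End ℚ Fk) ∈ PQ :=
  Submodule.mem_sup_left (Submodule.mem_span_singleton_self 1)

theorem PQ_mul {x y : Module.End ℚ Fk} (hx : x ∈ Vs) (hy : y ∈ Vs) : x * y ∈ PQ :=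
  Submodule.mem_sup_right (Submodule.mul_mem_mul hx hy)

theorem PQ_ind {p : Module.End ℚ Fk → Prop} (h1 : p 1)
    (hm : ∀ x ∈ Vs, ∀ y ∈ Vs, p (x * y))
    (hadd : ∀ x y, p x → p y → p (x + y)) (hs : ∀ (r : ℚ) x, p x → p (r • x))
    (x : Module.End ℚ Fk) (hx : x ∈ PQ) : p x := by
  obtain ⟨a, ha, b, hb, rfl⟩ := Submodule.mem_sup.1 hx
  obtain ⟨r, rfl⟩ := Submodule.mem_span_singleton.1 ha
  exact hadd _ _ (hs r _ h1) (Submodule.mul_induction_on hb hm hadd)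

theorem PQ_V (x v : Module.End ℚ Fk) (hx : x ∈ PQ) (hv : v ∈ Vs) : x * v - v * x ∈ Vs := by
  refine PQ_ind (p := fun x => x * v - v * x ∈ Vs) ?_ ?_ ?_ ?_ x hx
  · simp
  · intro a ha b hb
    obtain ⟨r, hr⟩ := anti b v hb hv
    obtain ⟨s, hs⟩ := anti a v ha hv
    have : a * b * v - v * (a * b) = r • a - s • b := by
      have e1 : a * b * v - v * (a * b) = a * (b * v + v * b) - (a * v + v * a) * b := by
        noncomm_ring
      rw [e1, hr, hs]; simp
    rw [this]
    exact Submodule.sub_mem _ (Submodule.smul_mem _ _ ha) (Submodule.smul_mem _ _ hb)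
  · intro a b ha hb
    have : (a + b) * v - v * (a + b) = (a * v - v * a) + (b * v - v * b) := by noncomm_ring
    rw [this]; exact Submodule.add_mem _ ha hb
  · intro r a ha
    have : (r • a) * v - v * (r • a) = r • (a * v - v * a) := by
      rw [smul_mul_assoc, mul_smul_comm, smul_sub]
    rw [this]; exact Submodule.smul_mem _ _ ha

theorem PQ_lie (x y : Module.End ℚ Fk) (hx : x ∈ PQ) (hy : y ∈ PQ) : x * y - y * x ∈ PQ := by
  refine PQ_ind (p := fun y => x * y - y * x ∈ PQ) ?_ ?_ ?_ ?_ y hy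
  · simp
  · intro a ha b hb
    have : x * (a * b) - a * b * x = (x * a - a * x) * b + a * (x * b - b * x) := by
      simp only [sub_mul, mul_sub, mul_assoc]; abel
    rw [this]
    exact Submodule.add_mem _ (PQ_mul (PQ_V x a hx ha) hb) (PQ_mul ha (PQ_V x b hx hb))
  · intro a b ha hb
    have : x * (a + b) - (a + b) * x = (x * a - a * x) + (x * b - b * x) := by noncomm_ring
    rw [this]; exact Submodule.add_mem _ ha hb
  · intro r a ha
    have : x * (r • a) - (r • a) * x = r • (x * a - a * x) := by
      rw [smul_mul_assoc, mul_smul_comm, smul_sub]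
    rw [this]; exact Submodule.smul_mem _ _ ha

theorem qop_PQ (j : ℕ) : qop j ∈ PQ := by
  unfold qop
  split_ifs
  · exact PQ_mul (cC_Vs _) (cC_Vs _)
  · exact PQ_mul (cC_Vs _) (cA_Vs _)

theorem uop_PQ (a : ℕ) : uop a ∈ PQ := by
  have : uop a = (2 : ℚ) • (cC a * cA a) - 1 := by
    unfold uop; rw [two_smul, two_mul]
  rw [this]
  exact Submodule.sub_mem _ (Submodule.smul_mem _ _ (PQ_mul (cC_Vs _) (cA_Vs _))) PQ_one

/-! ### The population filtration -/

def pc (w : ℕ) : ℕ := ((Finset.range 10).filter (fun k => w.testBit k = true)).card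

theorem pc_flip (w k : ℕ) : pc (w ^^^ 2 ^ k) ≤ pc w + 1 := by
  unfold pc
  refine le_trans (Finset.card_le_card (t := insert k _) ?_) (Finset.card_insert_le k _)
  intro x hx
  simp only [Finset.mem_filter, Finset.mem_insert, testBit_flip] at hx ⊢
  by_cases h : k = x
  · exact Or.inl h.symm
  · right; simpa [h] using hx

def Fl (n : ℕ) : Submodule ℚ Fk := Submodule.span ℚ (dl '' {w | pc w ≤ n})

theorem dl_Fl {w n : ℕ} (h : pc w ≤ n) : dl w ∈ Fl n := Submodule.subset_span ⟨w, h, rfl⟩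

theorem Fl_map (x : Module.End ℚ Fk) (n m : ℕ) (h : ∀ w, pc w ≤ n → x (dl w) ∈ Fl m) (v : Fk)
    (hv : v ∈ Fl n) : x v ∈ Fl m := by
  have : Fl n ≤ (Fl m).comap x := by
    refine Submodule.span_le.2 ?_
    rintro _ ⟨w, hw, rfl⟩
    exact h w hw
  exact this hv

theorem Vs_Fl (x : Module.End ℚ Fk) (hx : x ∈ Vs) (n : ℕ) (v : Fk) (hv : v ∈ Fl n) :
    x v ∈ Fl (n + 1) := by
  refine Vs_ind (p := fun x => x v ∈ Fl (n + 1)) ?_ ?_ ?_ ?_ ?_ x hx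
  · intro k
    refine Fl_map _ _ _ (fun w hw => ?_) v hv
    rw [cA_dl]
    split_ifs
    · exact Submodule.smul_mem _ _ (dl_Fl ((pc_flip w k).trans (by omega)))
    · exact Submodule.zero_mem _
  · intro k
    refine Fl_map _ _ _ (fun w hw => ?_) v hv
    rw [cC_dl]
    split_ifs
    · exact Submodule.zero_mem _
    · exact Submodule.smul_mem _ _ (dl_Fl ((pc_flip w k).trans (by omega)))
  · exact Submodule.zero_mem _
  · intro a b ha hb; exact Submodule.add_mem _ ha hb
  · intro r a ha; exact Submodule.smul_mem _ _ ha

theorem Fl_mono {n m : ℕ} (h : n ≤ m) : Fl n ≤ Fl m :=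
  Submodule.span_mono (Set.image_mono fun _ hw => le_trans hw h)

theorem PQ_Fl (x : Module.End ℚ Fk) (hx : x ∈ PQ) (n : ℕ) (v : Fk) (hv : v ∈ Fl n) :
    x v ∈ Fl (n + 2) := by
  refine PQ_ind (p := fun x => x v ∈ Fl (n + 2)) ?_ ?_ ?_ ?_ x hx
  · exact Fl_mono (by omega) hv
  · intro a ha b hb
    exact Vs_Fl a ha _ _ (Vs_Fl b hb _ _ hv)
  · intro a b ha hb; exact Submodule.add_mem _ ha hb
  · intro r a ha; exact Submodule.smul_mem _ _ ha

/-- coordinate functionals -/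
def co (w : ℕ) : Module.Dual ℚ Fk := Finsupp.lapply w

theorem co_dl (u w : ℕ) : co u (dl w) = if w = u then 1 else 0 := by
  simp [co, dl, Finsupp.single_apply]

theorem co_Fl (n u : ℕ) (h : n < pc u) (v : Fk) (hv : v ∈ Fl n) : co u v = 0 := by
  have : Fl n ≤ LinearMap.ker (co u) := by
    refine Submodule.span_le.2 ?_
    rintro _ ⟨w, hw, rfl⟩
    change co u (dl w) = 0
    rw [co_dl, if_neg]
    rintro rfl
    exact absurd hw (by simpa using h)
  exact this hv

theorem six_zero (a b c : Module.End ℚ Fk) (ha : a ∈ PQ) (hb : b ∈ PQ) (hc : c ∈ PQ) :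
    co 1023 (a (b (c (dl 0)))) = 0 := by
  have h1 : pc 1023 = 10 := by decide
  refine co_Fl 6 1023 (by rw [h1]; norm_num) _ ?_
  refine PQ_Fl a ha 4 _ (PQ_Fl b hb 2 _ (PQ_Fl c hc 0 _ (dl_Fl ?_)))
  decide

theorem co_qop (u j : ℕ) : co u ∘ₗ qop j = if al j (u ^^^ mk j) then co (u ^^^ mk j) else 0 := by
  refine fk_ext fun w => ?_
  rw [LinearMap.comp_apply, qop_dl]
  by_cases h : w = u ^^^ mk j
  · subst h
    rw [xor_self3]
    split_ifs <;> simp [co_dl]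
  · have h' : ¬ w ^^^ mk j = u := by
      rintro rfl; exact h (xor_self3 _ _).symm
    split_ifs <;> simp [co_dl, h, h']

def QT : Type := PQ
instance : AddCommGroup QT := inferInstanceAs (AddCommGroup PQ)
instance : Module ℚ QT := inferInstanceAs (Module ℚ PQ)

/-- the underlying operator -/
def QT.op : QT →ₗ[ℚ] Module.End ℚ Fk := PQ.subtype

theorem QT.ext' {x y : QT} (h : QT.op x = QT.op y) : x = y := Subtype.ext h

theorem QT.mem (x : QT) : QT.op x ∈ PQ := x.2

def QT.mk' (x : Module.End ℚ Fk) (h : x ∈ PQ) : QT := ⟨x, h⟩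

theorem QT.op_mk (x : Module.End ℚ Fk) (h : x ∈ PQ) : QT.op (QT.mk' x h) = x := rfl

/-- the functionals as a type -/
def QD : Type := QT →ₗ[ℚ] ℚ
instance : AddCommGroup QD := inferInstanceAs (AddCommGroup (QT →ₗ[ℚ] ℚ))
instance : Module ℚ QD := inferInstanceAs (Module ℚ (QT →ₗ[ℚ] ℚ))

def MM : Type := QT × Fk × QD
instance : AddCommGroup MM := inferInstanceAs (AddCommGroup (QT × Fk × QD))
instance : Module ℚ MM := inferInstanceAs (Module ℚ (QT × Fk × QD))

def p1 : MM →ₗ[ℚ] QT := LinearMap.fst ℚ QT (Fk × QD)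
def p2 : MM →ₗ[ℚ] Fk := LinearMap.fst ℚ Fk QD ∘ₗ LinearMap.snd ℚ QT (Fk × QD)
def p4 : MM →ₗ[ℚ] QD := LinearMap.snd ℚ Fk QD ∘ₗ LinearMap.snd ℚ QT (Fk × QD)
def evD : QD →ₗ[ℚ] (QT →ₗ[ℚ] ℚ) := LinearMap.id (M := QT →ₗ[ℚ] ℚ)
def p3 (c : QT) : MM →ₗ[ℚ] ℚ := LinearMap.applyₗ c ∘ₗ evD ∘ₗ p4

theorem p3_lin (m : MM) (c : QT) : p3 c m = evD (p4 m) c := rfl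

theorem p3_zero (m : MM) : p3 0 m = 0 := by rw [p3_lin, map_zero]
theorem p3_sub (m : MM) (c d : QT) : p3 (c - d) m = p3 c m - p3 d m := by
  rw [p3_lin, p3_lin, p3_lin, map_sub]

theorem MM.ext' {m n : MM} (h1 : p1 m = p1 n) (h2 : p2 m = p2 n) (h3 : ∀ c, p3 c m = p3 c n) :
    m = n := Prod.ext h1 (Prod.ext h2 (LinearMap.ext h3))

def adP (x : QT) : QT →ₗ[ℚ] QT where
  toFun c := QT.mk' (QT.op x * QT.op c - QT.op c * QT.op x) (PQ_lie _ _ x.mem c.mem)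
  map_add' c d := by
    apply QT.ext'
    simp only [map_add, mul_add, add_mul, QT.op_mk]; abel
  map_smul' r c := by
    apply QT.ext'
    simp only [map_smul, mul_smul_comm, smul_mul_assoc, smul_sub, RingHom.id_apply, QT.op_mk]

theorem adP_coe (x c : QT) : QT.op (adP x c) = QT.op x * QT.op c - QT.op c * QT.op x := rfl

def thM (x : QT) : Module.End ℚ MM where
  toFun m := (adP x (p1 m), QT.op x (p2 m), -((evD (p4 m)) ∘ₗ adP x))
  map_add' m n := by
    refine MM.ext' ?_ ?_ fun c => ?_
    · exact (adP x).map_add (p1 m) (p1 n)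
    · exact (QT.op x).map_add (p2 m) (p2 n)
    · exact neg_add (p3 (adP x c) m) (p3 (adP x c) n)
  map_smul' r m := by
    refine MM.ext' ?_ ?_ fun c => ?_
    · exact (adP x).map_smul r (p1 m)
    · exact (QT.op x).map_smul r (p2 m)
    · exact (mul_neg r (p3 (adP x c) m)).symm

def SM (v : Fk) (ψ : Module.Dual ℚ Fk) : Module.End ℚ MM where
  toFun m := (0, QT.op (p1 m) v, (ψ ∘ₗ LinearMap.applyₗ (p2 m)) ∘ₗ QT.op)
  map_add' m n := by
    refine MM.ext' ?_ ?_ fun c => ?_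
    · exact (add_zero (0 : QT)).symm
    · change QT.op (p1 (m + n)) v = QT.op (p1 m) v + QT.op (p1 n) v
      rw [map_add, map_add]; rfl
    · change ψ (QT.op c (p2 (m + n))) = ψ (QT.op c (p2 m)) + ψ (QT.op c (p2 n))
      rw [map_add, map_add, map_add]
  map_smul' r m := by
    refine MM.ext' ?_ ?_ fun c => ?_
    · exact (smul_zero (A := QT) r).symm
    · change QT.op (p1 (r • m)) v = r • QT.op (p1 m) v
      rw [map_smul, map_smul]; rfl
    · change ψ (QT.op c (p2 (r • m))) = r • ψ (QT.op c (p2 m))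
      rw [map_smul, map_smul, map_smul]

theorem mm_ext {a b : Module.End ℚ MM} (h1 : ∀ m, p1 (a m) = p1 (b m))
    (h2 : ∀ m, p2 (a m) = p2 (b m)) (h3 : ∀ m c, p3 c (a m) = p3 c (b m)) : a = b :=
  LinearMap.ext fun m => MM.ext' (h1 m) (h2 m) (h3 m)

theorem th1 (x : QT) (m : MM) : p1 (thM x m) = adP x (p1 m) := rfl
theorem th2 (x : QT) (m : MM) : p2 (thM x m) = QT.op x (p2 m) := rfl
theorem th3 (x : QT) (m : MM) (c : QT) : p3 c (thM x m) = - p3 (adP x c) m := rfl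
theorem sm1 (v : Fk) (ψ : Module.Dual ℚ Fk) (m : MM) : p1 (SM v ψ m) = 0 := rfl
theorem sm2 (v : Fk) (ψ : Module.Dual ℚ Fk) (m : MM) : p2 (SM v ψ m) = QT.op (p1 m) v := rfl
theorem sm3 (v : Fk) (ψ : Module.Dual ℚ Fk) (m : MM) (c : QT) :
    p3 c (SM v ψ m) = ψ (QT.op c (p2 m)) := rfl

theorem brm (a b : Module.End ℚ MM) (m : MM) : ⁅a, b⁆ m = a (b m) - b (a m) := rfl

theorem adP_zero (c : QT) : adP 0 c = 0 := by
  apply QT.ext'; rw [adP_coe]; simp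

theorem th_zero : thM 0 = 0 := by
  refine mm_ext (fun m => ?_) (fun m => ?_) (fun m c => ?_)
  · rw [th1, adP_zero]; simp
  · rw [th2]; simp
  · rw [th3, adP_zero]
    rw [p3_zero]; simp

theorem adP_adP (x y c : QT) : adP (adP x y) c = adP x (adP y c) - adP y (adP x c) := by
  apply QT.ext'
  rw [map_sub]
  simp only [adP_coe, mul_sub, sub_mul, mul_assoc]
  abel

theorem th_lie (x y : QT) : ⁅thM x, thM y⁆ = thM (adP x y) := by
  refine mm_ext (fun m => ?_) (fun m => ?_) (fun m c => ?_)
  · rw [brm, map_sub, th1, th1, th1, th1, th1, adP_adP]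
  · rw [brm, map_sub, th2, th2, th2, th2, th2, adP_coe]; rfl
  · rw [brm, map_sub, th3, th3, th3, th3, th3, adP_adP, p3_sub]
    ring
theorem th_S (x : QT) (v : Fk) (ψ : Module.Dual ℚ Fk) :
    ⁅thM x, SM v ψ⁆ = SM (QT.op x v) (-(ψ ∘ₗ QT.op x)) := by
  refine mm_ext (fun m => ?_) (fun m => ?_) (fun m c => ?_)
  · rw [brm, map_sub, th1, sm1, sm1, sm1, map_zero, sub_zero]
  · rw [brm, map_sub, th2, sm2, sm2, sm2, th1, adP_coe, LinearMap.sub_apply,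
      Module.End.mul_apply, Module.End.mul_apply]
    abel
  · rw [brm, map_sub, th3, sm3, sm3, sm3, th2, adP_coe,
      LinearMap.sub_apply, Module.End.mul_apply, Module.End.mul_apply, LinearMap.neg_apply,
      LinearMap.comp_apply, map_sub]
    abel

theorem S_S (v v' : Fk) (ψ ψ' : Module.Dual ℚ Fk) (m : MM) (c : QT) :
    p3 c (⁅SM v ψ, SM v' ψ'⁆ m) =
      ψ (QT.op c (QT.op (p1 m) v')) - ψ' (QT.op c (QT.op (p1 m) v)) := by
  rw [brm, map_sub, sm3, sm3, sm2, sm2]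

theorem S_S_zero (v v' : Fk) (ψ ψ' : Module.Dual ℚ Fk)
    (h : ∀ c d : QT, ψ (QT.op c (QT.op d v')) = ψ' (QT.op c (QT.op d v))) :
    ⁅SM v ψ, SM v' ψ'⁆ = 0 := by
  refine mm_ext (fun m => ?_) (fun m => ?_) (fun m c => ?_)
  · rw [brm, map_sub, sm1, sm1, sub_zero]; simp
  · rw [brm, map_sub, sm2, sm2, sm1, sm1]; simp
  · rw [S_S, h, sub_self]; simp

theorem S_zero : SM 0 0 = 0 := by
  refine mm_ext (fun m => ?_) (fun m => ?_) (fun m c => ?_)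
  · rw [sm1]; simp
  · rw [sm2, map_zero]; simp
  · rw [sm3]; simp

/-! ### Serre relations -/

def qP (j : ℕ) : QT := QT.mk' (qop j) (qop_PQ j)

theorem q_sq (j : ℕ) : qop j * qop j = 0 := by
  refine fk_ext fun w => ?_
  rw [Module.End.mul_apply, qop_dl]
  split_ifs with h
  · rw [qop_dl, if_neg]
    · simp
    · have := lo_ne_hi j
      simp only [al, mk, Nat.testBit_xor, Nat.testBit_two_pow, Bool.and_eq_true] at h ⊢
      simp [this] at h ⊢
      simp [h.2]
  · simp

theorem testBit_mk (w j k : ℕ) : (w ^^^ mk j).testBit k =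
    (w.testBit k ^^ (decide (lo j = k) ^^ decide (hi j = k))) := by
  simp only [mk, Nat.testBit_xor, Nat.testBit_two_pow]

theorem al_disj (i j w : ℕ) (h1 : lo j ≠ lo i) (h2 : hi j ≠ lo i) (h3 : lo j ≠ hi i)
    (h4 : hi j ≠ hi i) : al i (w ^^^ mk j) = al i w := by
  unfold al
  rw [testBit_mk, testBit_mk]
  simp [h1, h2, h3, h4]

theorem disj_idx : ∀ i < 10, ∀ j < 10, i = j ∨ adj i j = true ∨
    (i = 0 ∧ j = 9) ∨ (i = 9 ∧ j = 0) ∨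
      (lo j ≠ lo i ∧ hi j ≠ lo i ∧ lo j ≠ hi i ∧ hi j ≠ hi i) := by decide

theorem adj_idx : ∀ i < 10, ∀ j < 10, adj i j = true →
    (lo j ≠ lo i ∧ hi j ≠ lo i) ∨ (lo j ≠ hi i ∧ hi j ≠ hi i) := by decide

theorem q_09 : qop 0 * qop 9 = 0 := by
  refine fk_ext fun w => ?_
  rw [Module.End.mul_apply, qop_dl]
  split_ifs with h
  · rw [qop_dl, if_neg]
    · simp
    · unfold al at *
      rw [testBit_mk, testBit_mk]
      simp [lo, hi] at h ⊢
      simp [h]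
  · simp

theorem q_90 : qop 9 * qop 0 = 0 := by
  refine fk_ext fun w => ?_
  rw [Module.End.mul_apply, qop_dl]
  split_ifs with h
  · rw [qop_dl, if_neg]
    · simp
    · unfold al at *
      rw [testBit_mk, testBit_mk]
      simp [lo, hi] at h ⊢
      simp [h]
  · simp

theorem q_comm (i j : ℕ) (hi : i < 10) (hj : j < 10) (hij : i ≠ j) (ha : adj i j = false) :
    qop i * qop j = qop j * qop i := by
  rcases disj_idx i hi j hj with h | h | ⟨rfl, rfl⟩ | ⟨rfl, rfl⟩ | ⟨h1, h2, h3, h4⟩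
  · exact absurd h hij
  · rw [ha] at h; exact absurd h (by simp)
  · rw [q_09, q_90]
  · rw [q_09, q_90]
  · refine fk_ext fun w => ?_
    rw [Module.End.mul_apply, Module.End.mul_apply, qop_dl, qop_dl]
    have e1 := al_disj i j w h1 h2 h3 h4
    have e2 := al_disj j i w h1.symm h3.symm h2.symm h4.symm
    cases ai : al i w <;> cases aj : al j w <;> simp [qop_dl, e1, e2, ai, aj, xor_comm3 w (mk i)]

theorem q_adj (i j : ℕ) (hi : i < 10) (hj : j < 10) (ha : adj i j = true) :
    qop i * qop j * qop i = 0 := by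
  refine fk_ext fun w => ?_
  rw [Module.End.mul_apply, Module.End.mul_apply, qop_dl]
  split_ifs with h
  · rw [qop_dl]
    split_ifs with h'
    · rw [qop_dl, if_neg]
      · simp
      · have hl := lo_ne_hi i
        unfold al at h ⊢
        simp only [testBit_mk]
        rcases adj_idx i hi j hj ha with ⟨h1, h2⟩ | ⟨h1, h2⟩
        · simp [h1, h2, hl.symm] at h ⊢
          simp [h.1]
        · simp [h1, h2, hl] at h ⊢
          simp [h.2]
    · simp
  · simp

def ER (i : Fin 11) : Module.End ℚ MM := if i = 9 then SM (dl 0) (co 1023) else thM (qP (mv i))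

theorem qP_op (j : ℕ) : QT.op (qP j) = qop j := rfl

theorem th_q_comm (i j : ℕ) (hi : i < 10) (hj : j < 10) (hij : i ≠ j) (ha : adj i j = false) :
    ⁅thM (qP i), thM (qP j)⁆ = 0 := by
  rw [th_lie, ← th_zero]
  congr 1
  apply QT.ext'
  rw [adP_coe, qP_op, qP_op, q_comm i j hi hj hij ha, sub_self, map_zero]

theorem th_q_adj (i j : ℕ) (hi : i < 10) (hj : j < 10) (ha : adj i j = true) :
    ⁅thM (qP i), ⁅thM (qP i), thM (qP j)⁆⁆ = 0 := by
  rw [th_lie, th_lie, ← th_zero]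
  congr 1
  apply QT.ext'
  rw [adP_coe, adP_coe, qP_op, qP_op, map_zero]
  have h1 := q_sq i
  have h2 := q_adj i j hi hj ha
  have : qop i * (qop i * qop j - qop j * qop i) - (qop i * qop j - qop j * qop i) * qop i =
      (qop i * qop i) * qop j - (qop i * qop j * qop i) - (qop i * qop j * qop i)
        + qop j * (qop i * qop i) := by
    simp only [sub_mul, mul_sub, mul_assoc]; abel
  rw [this, h1, h2]; simp

theorem th_q_S (j w : ℕ) (r : ℚ) (hj : j < 10) :
    ⁅thM (qP j), SM (dl w) (r • co (1023 ^^^ w))⁆ =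
      if al j w then SM (dl (w ^^^ mk j)) ((-r) • co (1023 ^^^ (w ^^^ mk j))) else 0 := by
  have h := al_compl j w hj
  rw [← Nat.xor_assoc] at h
  rw [th_S, qP_op, qop_dl, LinearMap.smul_comp, co_qop, h, ← Nat.xor_assoc]
  cases al j w
  · simp [S_zero]
  · simp

theorem th_q_S0 (j : ℕ) (hj : j < 10) :
    ⁅thM (qP j), SM (dl 0) (co 1023)⁆ =
      if j = 9 then SM (dl (mk 9)) (-co (1023 ^^^ mk 9)) else 0 := by
  have h := th_q_S j 0 1 hj
  rw [Nat.xor_zero, one_smul, Nat.zero_xor] at h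
  rw [h]
  have : ∀ j < 10, al j 0 = (j == 9) := by decide
  rw [this j hj]
  by_cases h9 : j = 9
  · subst h9; simp
  · simp [h9]

theorem S0_serre : ⁅SM (dl 0) (co 1023), ⁅thM (qP 9), SM (dl 0) (co 1023)⁆⁆ = 0 := by
  rw [th_S]
  refine S_S_zero _ _ _ _ fun c d => ?_
  rw [qP_op, six_zero _ _ _ c.mem d.mem (qop_PQ 9), LinearMap.neg_apply, LinearMap.comp_apply,
    six_zero _ _ _ (qop_PQ 9) c.mem d.mem, neg_zero]

theorem hA2 (i : Fin 11) : E11M i i = 2 := if_pos rfl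
theorem hA01 (i j : Fin 11) (h : i ≠ j) : E11M i j = 0 ∨ E11M i j = -1 := by
  unfold E11M
  rw [if_neg h]
  split_ifs
  · right; rfl
  · left; rfl
theorem hAs (i j : Fin 11) : E11M i j = E11M j i := by
  unfold E11M
  simp only [Fin.ext_iff]
  split_ifs <;> first | rfl | omega

theorem mv_nine : ∀ i : Fin 11, i ≠ 9 → (mv i = 9 ↔ i = 8) := by decide

theorem serreEl_neg {L B : Type*} [LieRing L] (A : Matrix B B ℤ) (e : B → L) (i j : B)
    (h : A i j = -1) : serreEl A e i j = ⁅e i, ⁅e i, e j⁆⁆ := if_pos h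

theorem serreEl_zero {L B : Type*} [LieRing L] (A : Matrix B B ℤ) (e : B → L) (i j : B)
    (h : A i j = 0) : serreEl A e i j = ⁅e i, e j⁆ :=
  if_neg (by rw [h]; norm_num)

theorem serreEl_diag {L B : Type*} [LieRing L] (A : Matrix B B ℤ) (e : B → L) (i : B)
    (h : A i i = 2) : serreEl A e i i = 0 := by
  unfold serreEl
  rw [if_neg (by rw [h]; norm_num), lie_self]

theorem ER_nine : ER 9 = SM (dl 0) (co 1023) := by
  unfold ER
  rw [if_pos rfl]

theorem ER_ne (j : Fin 11) (hj : j ≠ 9) : ER j = thM (qP (mv j)) := by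
  unfold ER
  rw [if_neg hj]

theorem ER_serre_nine_left (j : Fin 11) (hj : j ≠ 9) : serreEl E11M ER 9 j = 0 := by
  obtain ⟨h1, h2⟩ := idx_mv j hj
  have hn := idx_nine _ h2
  rw [h1, hAs] at hn
  by_cases h9 : mv j = 9
  · rw [if_pos h9] at hn
    rw [serreEl_neg _ _ _ _ hn, ER_nine, ER_ne j hj,
      ← lie_skew (SM (dl 0) (co 1023)) (thM (qP (mv j))), h9, lie_neg, S0_serre, neg_zero]
  · rw [if_neg h9] at hn
    rw [serreEl_zero _ _ _ _ hn, ER_nine, ER_ne j hj,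
      ← lie_skew (SM (dl 0) (co 1023)) (thM (qP (mv j))), th_q_S0 _ h2, if_neg h9, neg_zero]

theorem th_th_S0 : ⁅thM (qP 9), ⁅thM (qP 9), SM (dl 0) (co 1023)⁆⁆ = 0 := by
  rw [th_S, th_S, qP_op]
  have s1 : qop 9 (qop 9 (dl 0)) = 0 := by
    have h := LinearMap.congr_fun (q_sq 9) (dl 0)
    rw [Module.End.mul_apply] at h
    rw [h, LinearMap.zero_apply]
  have s2 : -((-(co 1023 ∘ₗ qop 9)) ∘ₗ qop 9) = 0 := by
    rw [LinearMap.neg_comp, neg_neg, LinearMap.comp_assoc,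
      ← Module.End.mul_eq_comp, q_sq, LinearMap.comp_zero]
  rw [s1, s2, S_zero]

theorem ER_serre_nine_right (i : Fin 11) (hi : i ≠ 9) : serreEl E11M ER i 9 = 0 := by
  obtain ⟨h1, h2⟩ := idx_mv i hi
  have hn := idx_nine _ h2
  rw [h1] at hn
  by_cases h9 : mv i = 9
  · rw [if_pos h9] at hn
    rw [serreEl_neg _ _ _ _ hn, ER_nine, ER_ne i hi, h9, th_th_S0]
  · rw [if_neg h9] at hn
    rw [serreEl_zero _ _ _ _ hn, ER_nine, ER_ne i hi, th_q_S0 _ h2, if_neg h9]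

theorem ER_serre_ne (i j : Fin 11) (hij : i ≠ j) (hi : i ≠ 9) (hj : j ≠ 9) :
    serreEl E11M ER i j = 0 := by
  obtain ⟨h1, h2⟩ := idx_mv i hi
  obtain ⟨g1, g2⟩ := idx_mv j hj
  have hne : mv i ≠ mv j := fun h => hij (by rw [← h1, ← g1, h])
  have hn := idx_adj _ h2 _ g2 hne
  rw [h1, g1] at hn
  by_cases ha : adj (mv i) (mv j) = true
  · rw [if_pos ha] at hn
    rw [serreEl_neg _ _ _ _ hn, ER_ne i hi, ER_ne j hj]
    exact th_q_adj _ _ h2 g2 ha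
  · rw [if_neg ha] at hn
    rw [serreEl_zero _ _ _ _ hn, ER_ne i hi, ER_ne j hj]
    exact th_q_comm _ _ h2 g2 hne (by simpa using ha)

theorem ER_serre (i j : Fin 11) : serreEl E11M ER i j = 0 := by
  by_cases hij : i = j
  · subst hij
    exact serreEl_diag _ _ _ (hA2 i)
  by_cases hi : i = 9
  · subst hi
    exact ER_serre_nine_left j (fun h => hij h.symm)
  by_cases hj : j = 9
  · subst hj
    exact ER_serre_nine_right i hi
  exact ER_serre_ne i j hij hi hj

def sR (w : ℕ) : Module.End ℚ MM := SM (dl w) (sgw w • co (1023 ^^^ w))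

theorem eW_wdAux (n w : ℕ) (hw : w ∈ evs) (hn : w ≤ n) : eW ER (wdAux n w) = sR w := by
  have hz : sR 0 = SM (dl 0) (co 1023) := by
    have : sgw 0 = 1 := by simp [sgw, chi, bsg]
    unfold sR
    rw [this, one_smul, Nat.xor_zero]
  induction n generalizing w with
  | zero =>
    obtain rfl : w = 0 := by omega
    rw [hz, wdAux, eW, if_pos rfl]; rfl
  | succ n ih =>
    rw [wdAux]
    by_cases h : w = 0
    · subst h
      rw [hz, beq_self_eq_true, cond_true, eW, if_pos rfl]; rfl
    · have h' : (w == 0) = false := by simpa using h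
      obtain ⟨h1, h2, h3, h4⟩ := prv_lt w hw h
      have hidx : ∀ j < 10, idx j ≠ 9 ∧ mv (idx j) = j := by decide
      have eE : ER (idx (canon w)) = thM (qP (canon w)) := by
        unfold ER
        rw [if_neg (hidx _ h1).1, (hidx _ h1).2]
      rw [h', cond_false, eW, if_neg (wdAux_ne _ _), ih (prv w) h4 (by omega), eE]
      unfold sR
      rw [th_q_S _ _ _ h1, if_pos h2, ← sgw_mk _ _ h1]
      unfold prv
      rw [xor_self3]

theorem gr_sE (w : ℕ) (hw : w ∈ evs) : Gr E11M ER (sE w) (sR w) := by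
  have h := gr_eW E11M ER (wd w)
  rw [show eW ER (wd w) = sR w from eW_wdAux w w hw le_rfl] at h
  rw [sE_wd]
  exact h

theorem gr_Gv (I : Finset ℕ) : Gr E11M ER (Gv sE I) (Gv sR I) := by
  unfold Gv
  refine gr_sum E11M ER _ _ _ fun w hw => gr_smul E11M ER _ (gr_lie E11M ER (gr_sE w hw) ?_)
  exact gr_sE _ (evs_compl w hw)

/-! ### The detecting functionals -/

theorem J46_mem {J : Finset ℕ} (hJ : J ∈ J46) :
    J ⊆ Finset.range 10 ∧ (J.card = 0 ∨ J.card = 2) := by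
  unfold J46 at hJ
  rw [Finset.mem_union, Finset.mem_powersetCard, Finset.mem_powersetCard] at hJ
  rcases hJ with h | h
  · exact ⟨h.1, Or.inl h.2⟩
  · exact ⟨h.1, Or.inr h.2⟩

theorem J46_ops {J : Finset ℕ} (hJ : J ∈ J46) :
    ∃ c d : QT, ∀ w, QT.op c (QT.op d (dl w)) = chi J w • dl w := by
  obtain ⟨h1, h2 | h2⟩ := J46_mem hJ
  · rw [Finset.card_eq_zero] at h2
    subst h2
    exact ⟨QT.mk' 1 PQ_one, QT.mk' 1 PQ_one, fun w => by simp [QT.op_mk, chi]⟩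
  · obtain ⟨a, b, hab, rfl⟩ := Finset.card_eq_two.1 h2
    refine ⟨QT.mk' _ (uop_PQ a), QT.mk' _ (uop_PQ b), fun w => ?_⟩
    rw [QT.op_mk, QT.op_mk, uop_dl, map_smul, uop_dl, smul_smul]
    congr 1
    unfold chi
    rw [Finset.prod_pair hab]; ring

theorem J46_fun {J : Finset ℕ} (hJ : J ∈ J46) : ∃ f : Module.End ℚ MM →ₗ[ℚ] ℚ,
    ∀ I, f (Gv sR I) = 2 * ∑ w ∈ evs, chi I w * chi J w := by
  obtain ⟨c, d, h⟩ := J46_ops hJ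
  obtain ⟨m, hm⟩ : ∃ m : MM, p1 m = d := ⟨(d, 0, 0), rfl⟩
  refine ⟨p3 c ∘ₗ LinearMap.applyₗ m, fun I => ?_⟩
  unfold Gv
  rw [map_sum, Finset.mul_sum]
  refine Finset.sum_congr rfl fun w hw => ?_
  have hc : chi J (1023 ^^^ w) = chi J w := by
    obtain ⟨h1, h2⟩ := J46_mem hJ
    rw [chi_compl J h1]
    rcases h2 with h2 | h2 <;> rw [h2] <;> norm_num
  rw [map_smul, LinearMap.comp_apply, LinearMap.applyₗ_apply_apply]
  unfold sR
  rw [S_S, hm, h, h, xor_compl2, sgw_compl, hc]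
  have hs : sgw w * sgw w = 1 := chi_sq _ _
  simp only [map_smul, LinearMap.smul_apply, co_dl, if_true, smul_eq_mul]
  linear_combination (2 * chi I w * chi J w) * hs

theorem evs_flip2 (w k l : ℕ) (hk : k < 10) (hl : l < 10) (hw : w ∈ evs) :
    w ^^^ 2 ^ k ^^^ 2 ^ l ∈ evs := by
  unfold evs at *
  rw [Finset.mem_filter, Finset.mem_range] at *
  constructor
  · have p : ∀ k, k < 10 → 2 ^ k < 2 ^ 10 := fun k hk => Nat.pow_lt_pow_right (by norm_num) hk
    have := Nat.xor_lt_two_pow (n := 10) (Nat.xor_lt_two_pow (n := 10) (x := w) (by omega) (p k hk)) (p l hl)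
    simpa using this
  · rw [chi_flip, chi_flip, if_pos (by simpa using hl), if_pos (by simpa using hk), neg_neg, hw.2]

theorem orth {I J : Finset ℕ} (hI : I ∈ J46) (hJ : J ∈ J46) (hIJ : I ≠ J) :
    ∑ w ∈ evs, chi I w * chi J w = 0 := by
  obtain ⟨i1, i2⟩ := J46_mem hI
  obtain ⟨j1, j2⟩ := J46_mem hJ
  obtain ⟨k, hk, hkk⟩ : ∃ k, k < 10 ∧ ¬ (k ∈ I ↔ k ∈ J) := by
    by_contra! h
    refine hIJ (Finset.ext fun k => ?_)
    by_cases hk : k < 10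
    · exact h k hk
    · exact ⟨fun h => absurd (by simpa using i1 h) hk, fun h => absurd (by simpa using j1 h) hk⟩
  obtain ⟨l, hl, hlu⟩ : ∃ l ∈ Finset.range 10, l ∉ I ∪ J := by
    by_contra! h
    have h1 := Finset.card_le_card (show Finset.range 10 ⊆ I ∪ J from h)
    have h2 := Finset.card_union_le I J
    rw [Finset.card_range] at h1
    omega
  rw [Finset.mem_union, not_or] at hlu
  have hl' : l < 10 := by simpa using hl
  have key : ∑ w ∈ evs, chi I w * chi J w = ∑ w ∈ evs, -(chi I w * chi J w) := by
    refine Finset.sum_bij' (fun w _ => w ^^^ 2 ^ k ^^^ 2 ^ l) (fun w _ => w ^^^ 2 ^ k ^^^ 2 ^ l)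
      (fun w hw => evs_flip2 w k l hk hl' hw) (fun w hw => evs_flip2 w k l hk hl' hw) ?_ ?_ ?_
    · intro w _
      rw [xor_comm3 _ (2 ^ l) (2 ^ k), xor_self3, xor_self3]
    · intro w _
      rw [xor_comm3 _ (2 ^ l) (2 ^ k), xor_self3, xor_self3]
    · intro w _
      rw [chi_flip, chi_flip, chi_flip, chi_flip, if_neg hlu.1, if_neg hlu.2]
      by_cases a : k ∈ I <;> by_cases b : k ∈ J <;> simp [a, b] at hkk ⊢
  rw [Finset.sum_neg_distrib] at key
  linarith

theorem diag (I : Finset ℕ) : ∑ w ∈ evs, chi I w * chi I w ≠ 0 := by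
  rw [Finset.sum_congr rfl fun w _ => chi_sq I w]
  simp only [Finset.sum_const, nsmul_eq_mul, mul_one, ne_eq, Nat.cast_eq_zero,
    Finset.card_eq_zero]
  exact Finset.ne_empty_of_mem evs_zero

theorem Gv_indep : LinearIndependent ℚ (fun I : J46 => Gv sE (I : Finset ℕ)) := by
  rw [Fintype.linearIndependent_iff]
  intro g hg J
  have h1 : Gr E11M ER (∑ I : J46, g I • Gv sE (I : Finset ℕ))
      (∑ I : J46, g I • Gv sR (I : Finset ℕ)) :=
    gr_sum E11M ER _ _ _ fun I _ => gr_smul E11M ER _ (gr_Gv I)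
  rw [hg] at h1
  have h2 := gr_fun E11M hA2 hA01 hAs ER ER_serre h1
  obtain ⟨f, hf⟩ := J46_fun J.2
  have h3 := congrArg f h2
  rw [map_sum, map_zero, Finset.sum_eq_single J] at h3
  · rw [map_smul, hf, smul_eq_mul] at h3
    rcases mul_eq_zero.1 h3 with h | h
    · exact h
    · exact absurd h (mul_ne_zero (by norm_num) (diag _))
  · intro I _ hI
    rw [map_smul, hf, orth I.2 J.2 (fun h => hI (Subtype.ext h))]; simp
  · intro h; exact absurd (Finset.mem_univ _) h

theorem mult_bet : rootMult E11M bet = 46 := by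
  have e : rootSpace E11M bet = Submodule.span ℚ (Set.range fun I : J46 => Gv sE (I : Finset ℕ)) := by
    refine le_antisymm (rootSpace_le.trans (Submodule.span_mono ?_)) (Submodule.span_le.2 ?_)
    · rintro _ ⟨I, hI, rfl⟩
      exact ⟨⟨I, hI⟩, rfl⟩
    · rintro _ ⟨I, rfl⟩
      exact Gv_root I
  unfold rootMult
  rw [e, finrank_span_eq_card Gv_indep, Fintype.card_coe, J46_card]

theorem e11_first_nonaffine_root_mult :
    (∑ i, ∑ j, ![1,2,3,4,5,6,7,8,5,2,4] i * E11M i j * ![1,2,3,4,5,6,7,8,5,2,4] j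
      = (-2 : ℤ)) ∧
    rootMult E11M ![1,2,3,4,5,6,7,8,5,2,4] = 46 :=
  ⟨by decide +kernel, mult_bet⟩
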